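/- arXiv:1609.08016 — 3 statements merged into one kernel-verified Lean document; each statement's English description precedes it below -/
import Mathlib

section
/- Fix an integer d ≥ 2, let a ∈ [1/2, 1] and b ∈ [0, 1−a]. Then the matrix ρ = (2a/(d(d−1)))·W₋ + (2b/(d(d−1)))·(W₊ − Q) + ((1−a−b)/d)·Q lies in the convex hull, taken in the real vector space of (d²)×(d²) complex matrices, of the Werner orbit orb_wer(ψ_a) = { |(U⊗U)ψ_a⟩⟨(U⊗U)ψ_a| : U a d×d unitary }. -/
open scoped BigOperators

/-- An orthonormal pair extends to a unitary having it as columns `z`, `o`. -/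
lemma exists_unitary_cols (d : ℕ) (z o : Fin d) (hzo : z ≠ o) (x y : Fin d → ℂ)
    (hxx : ∑ k, x k * star (x k) = 1) (hyy : ∑ k, y k * star (y k) = 1)
    (hxy : ∑ k, y k * star (x k) = 0) :
    ∃ U : Matrix.unitaryGroup (Fin d) ℂ,
      (∀ k, (U : Matrix (Fin d) (Fin d) ℂ) k z = x k) ∧
      (∀ k, (U : Matrix (Fin d) (Fin d) ℂ) k o = y k) := by
  classical
  let v : Fin d → EuclideanSpace ℂ (Fin d) := fun t =>
    if t = z then WithLp.toLp 2 x else WithLp.toLp 2 y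
  have hxy' : ∑ k, x k * star (y k) = 0 := by
    have := congrArg star hxy
    simpa [mul_comm] using this
  have hv : Orthonormal ℂ (({z, o} : Set (Fin d)).domRestrict v) := by
    rw [orthonormal_iff_ite]
    rintro ⟨s, hs⟩ ⟨t, ht⟩
    simp only [Set.mem_insert_iff, Set.mem_singleton_iff] at hs ht
    rcases hs with rfl | rfl <;> rcases ht with rfl | rfl <;>
      simp only [Set.domRestrict_apply, v, hzo, hzo.symm, if_true, if_false, PiLp.inner_apply,
        RCLike.inner_apply, Subtype.mk.injEq] <;>
      first | simpa using hxx | simpa using hyy | simpa using hxy | simpa using hxy'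
  obtain ⟨b, hb⟩ := hv.exists_orthonormalBasis_extension_of_card_eq (by simp)
  refine ⟨⟨(EuclideanSpace.basisFun (Fin d) ℂ).toBasis.toMatrix b,
    (EuclideanSpace.basisFun (Fin d) ℂ).toMatrix_orthonormalBasis_mem_unitary b⟩, ?_, ?_⟩
  · intro k
    simp [Module.Basis.toMatrix_apply, hb z (by simp), v]
  · intro k
    simp [Module.Basis.toMatrix_apply, hb o (by simp), v, hzo.symm]

lemma kron_mulVec (d : ℕ) (z o : Fin d) (U : Matrix (Fin d) (Fin d) ℂ) (α β : ℂ) :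
    (Matrix.kroneckerMap (· * ·) U U).mulVec
      (fun p => (if p = (z, o) then α else 0) - (if p = (o, z) then β else 0))
    = fun p => α * (U p.1 z * U p.2 o) - β * (U p.1 o * U p.2 z) := by
  ext p
  simp only [Matrix.mulVec, dotProduct, mul_sub, Finset.sum_sub_distrib, mul_ite, mul_zero,
    Finset.sum_ite_eq', Finset.sum_ite_eq, Finset.mem_univ, if_true, Matrix.kroneckerMap_apply]
  ring

/-- The phase average is in the convex hull. -/
lemma phase_avg (d : ℕ) (i j : Fin d) (hij : i ≠ j) (α β c s : ℝ) (hcs : c ^ 2 + s ^ 2 = 1)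
    (S : Set (Matrix (Fin d × Fin d) (Fin d × Fin d) ℂ))
    (hS : ∀ x y : Fin d → ℂ, ∑ k, x k * star (x k) = 1 → ∑ k, y k * star (y k) = 1 →
      ∑ k, y k * star (x k) = 0 →
      Matrix.vecMulVec (fun p : Fin d × Fin d => (α : ℂ) * (x p.1 * y p.2) - β * (y p.1 * x p.2))
        (star (fun p : Fin d × Fin d => (α : ℂ) * (x p.1 * y p.2) - β * (y p.1 * x p.2))) ∈ S)
    (e : Fin d → Fin d → ℂ) (he : ∀ i k, e i k = if k = i then 1 else 0)
    (p q r : ℝ) (hp : p = α * c ^ 2 + β * s ^ 2) (hq : q = -(α * s ^ 2 + β * c ^ 2))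
    (hr : r = (α - β) * c * s) :
    Matrix.of (fun P R : Fin d × Fin d =>
      ((r : ℂ) ^ 2 * (e i P.1 * e i P.2 * e i R.1 * e i R.2)
      + (p * (e i P.1 * e j P.2) + q * (e j P.1 * e i P.2)) *
        (p * (e i R.1 * e j R.2) + q * (e j R.1 * e i R.2))
      + (r : ℂ) ^ 2 * (e j P.1 * e j P.2 * e j R.1 * e j R.2))) ∈ convexHull ℝ S := by
  classical
  let x : ℂ → Fin d → ℂ := fun u k => c * e i k + u * s * e j k
  let y : ℂ → Fin d → ℂ := fun u k => -s * e i k + u * c * e j k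
  have hstar : ∀ i k, star (e i k) = e i k := by
    intro i k; rw [he]; split_ifs <;> simp
  have hii : ∀ i, ∑ k, e i k * e i k = 1 := by intro i; simp [he]
  have hij' : ∑ k, e i k * e j k = 0 := by simp [he, hij.symm]
  have hcs' : (c : ℂ) ^ 2 + (s : ℂ) ^ 2 = 1 := by exact_mod_cast hcs
  have key : ∀ (a1 a2 b1 b2 : ℂ), ∑ k, (a1 * e i k + a2 * e j k) * (b1 * e i k + b2 * e j k)
      = a1 * b1 + a2 * b2 := by
    intro a1 a2 b1 b2
    have : ∀ k, (a1 * e i k + a2 * e j k) * (b1 * e i k + b2 * e j k)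
      = a1 * b1 * (e i k * e i k) + (a1 * b2 + a2 * b1) * (e i k * e j k)
        + a2 * b2 * (e j k * e j k) := by intro k; ring
    simp only [this, Finset.sum_add_distrib, ← Finset.mul_sum, hii, hij']
    ring
  have hsx : ∀ u k, star (x u k) = c * e i k + star u * s * e j k := by
    intro u k
    simp only [x, star_add, star_mul', hstar]
    simp
  have hsy : ∀ u k, star (y u k) = -s * e i k + star u * c * e j k := by
    intro u k
    simp only [y, star_add, star_mul', hstar]
    simp
  have hmem : ∀ u : ℂ, u * star u = 1 →
      Matrix.vecMulVec
        (fun p : Fin d × Fin d => (α : ℂ) * (x u p.1 * y u p.2) - β * (y u p.1 * x u p.2))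
        (star (fun p : Fin d × Fin d =>
          (α : ℂ) * (x u p.1 * y u p.2) - β * (y u p.1 * x u p.2))) ∈ convexHull ℝ S := by
    intro u hu
    apply subset_convexHull
    apply hS
    · simp only [hsx]; simp only [x]; rw [key]; linear_combination hcs' + (s : ℂ) ^ 2 * hu
    · simp only [hsy]; simp only [y]; rw [key]; linear_combination hcs' + (c : ℂ) ^ 2 * hu
    · simp only [hsx]; simp only [y]; rw [key]; linear_combination (c : ℂ) * s * hu
  have hc := convex_convexHull ℝ S
  have h1 := hmem 1 (by simp)
  have h2 := hmem (-1) (by simp)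
  have h3 := hmem Complex.I (by simp)
  have h4 := hmem (-Complex.I) (by simp)
  have h12 := hc h1 h2 (a := 1 / 2) (b := 1 / 2) (by norm_num) (by norm_num) (by norm_num)
  have h34 := hc h3 h4 (a := 1 / 2) (b := 1 / 2) (by norm_num) (by norm_num) (by norm_num)
  have h := hc h12 h34 (a := 1 / 2) (b := 1 / 2) (by norm_num) (by norm_num) (by norm_num)
  convert h using 1
  have hval : ∀ (u : ℂ) (P : Fin d × Fin d),
      (α : ℂ) * (x u P.1 * y u P.2) - β * (y u P.1 * x u P.2)
      = -r * (e i P.1 * e i P.2) + u * (p * (e i P.1 * e j P.2) + q * (e j P.1 * e i P.2))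
        + u ^ 2 * r * (e j P.1 * e j P.2) := by
    intro u P
    simp only [x, y, hp, hq, hr]
    push_cast
    ring
  ext P R
  simp only [Matrix.add_apply, Matrix.smul_apply, Matrix.vecMulVec_apply, Pi.star_apply, hval,
    Matrix.of_apply, star_add, star_mul', star_neg, star_pow, hstar, star_one,
    Complex.real_smul]
  have hI : Complex.I ^ 2 = -1 := Complex.I_sq
  have hI4 : Complex.I ^ 4 = 1 := Complex.I_pow_four
  have hI3 : Complex.I ^ 3 = -Complex.I := Complex.I_pow_three
  simp only [Complex.star_def, Complex.conj_I, Complex.conj_ofReal]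
  push_cast
  ring_nf
  simp only [hI, hI4, hI3]
  ring

lemma sum_four (d : ℕ) (e : Fin d → Fin d → ℂ) (he : ∀ i k, e i k = if k = i then 1 else 0)
    (k l m n : Fin d) :
    ∑ i, e i k * e i l * e i m * e i n = if k = l ∧ k = m ∧ k = n then 1 else 0 := by
  rw [Finset.sum_eq_single k]
  · simp only [he]
    by_cases h1 : k = l
    · subst h1
      by_cases h2 : k = m
      · subst h2
        by_cases h3 : k = n
        · subst h3; simp
        · simp [h3, Ne.symm h3]
      · simp [h2, Ne.symm h2]
    · simp [h1, Ne.symm h1]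
  · intro i _ hi; simp [he, hi.symm]
  · simp

lemma mul_ite_and (A B : Prop) [Decidable A] [Decidable B] :
    (if A then (1 : ℂ) else 0) * (if B then (1 : ℂ) else 0) = if A ∧ B then 1 else 0 := by
  by_cases hA : A <;> by_cases hB : B <;> simp [hA, hB]

lemma entry_identity (d : ℕ) (k l m n : Fin d) (a b D : ℂ) (hD : D ≠ 0) (hD1 : D - 1 ≠ 0) :
    2 * a / (D * (D - 1)) * (2⁻¹ * ((if k = m ∧ l = n then 1 else 0)
          - if k = n ∧ l = m then 1 else 0))
      + 2 * b / (D * (D - 1)) * (2⁻¹ * ((if k = m ∧ l = n then 1 else 0)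
          + if k = n ∧ l = m then 1 else 0) - if k = l ∧ m = k ∧ n = l then 1 else 0)
      + (1 - a - b) / D * (if k = l ∧ m = k ∧ n = l then 1 else 0)
      = 1 / (D * (D - 1)) * ((1 - a - b) * D * (if k = l ∧ k = m ∧ k = n then 1 else 0)
        + (a + b) * (if k = m ∧ l = n then 1 else 0)
        + (b - a) * (if k = n ∧ l = m then 1 else 0)
        - (1 - a - b + (a + b) + (b - a)) * (if k = l ∧ k = m ∧ k = n then 1 else 0)) := by
  by_cases h1 : k = l
  · subst h1
    by_cases h2 : k = m
    · subst h2
      by_cases h3 : k = n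
      · subst h3; simp; field_simp; ring
      · simp [h3, Ne.symm h3]
    · by_cases h3 : k = n
      · subst h3; simp [h2, Ne.symm h2]
      · simp [h2, Ne.symm h2, h3, Ne.symm h3]
  · by_cases h2 : k = m
    · subst h2
      by_cases h3 : l = n
      · subst h3; simp [h1, Ne.symm h1]; field_simp
      · simp [h1, Ne.symm h1, h3, Ne.symm h3]
    · by_cases h3 : k = n
      · subst h3
        by_cases h4 : l = m
        · subst h4; simp [h1, Ne.symm h1]; field_simp; ring
        · simp [h1, Ne.symm h1, h2, Ne.symm h2, h4, Ne.symm h4]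
      · simp [h1, h2, Ne.symm h2, h3, Ne.symm h3]

/-- For `a ∈ [1/2,1]` and `b ∈ [0,1−a]`, the phase-permutation Werner state
`ρ = (2a/(d(d−1)))W₋ + (2b/(d(d−1)))(W₊ − Q) + ((1−a−b)/d)Q` lies in the convex hull
of the Werner orbit `{ |(U⊗U)ψ_a⟩⟨(U⊗U)ψ_a| : U unitary }` of the minimizing pure
state `ψ_a = √(1/2+√(a(1−a)))|01⟩ − √(1/2−√(a(1−a)))|10⟩`. -/
theorem phasePermWerner_mem_convexHull_wernerOrbit (d : ℕ) (hd : 2 ≤ d)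
    (a b : ℝ) (ha : a ∈ Set.Icc (1 / 2 : ℝ) 1) (hb : b ∈ Set.Icc (0 : ℝ) (1 - a))
    (W : Matrix (Fin d × Fin d) (Fin d × Fin d) ℂ)
    (hW : ∀ p q, W p q = if p.1 = q.2 ∧ p.2 = q.1 then 1 else 0)
    (Wm Wp : Matrix (Fin d × Fin d) (Fin d × Fin d) ℂ)
    (hWm : Wm = (2 : ℝ)⁻¹ • (1 - W)) (hWp : Wp = (2 : ℝ)⁻¹ • (1 + W))
    (Q : Matrix (Fin d × Fin d) (Fin d × Fin d) ℂ)
    (hQ : ∀ p q, Q p q = if p.1 = p.2 ∧ q = p then 1 else 0)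
    (ψa : Fin d × Fin d → ℂ)
    (hψa : ψa = fun p =>
      (if p = ((⟨0, by omega⟩ : Fin d), (⟨1, by omega⟩ : Fin d)) then
          ((Real.sqrt (1 / 2 + Real.sqrt (a * (1 - a))) : ℝ) : ℂ) else 0)
      - (if p = ((⟨1, by omega⟩ : Fin d), (⟨0, by omega⟩ : Fin d)) then
          ((Real.sqrt (1 / 2 - Real.sqrt (a * (1 - a))) : ℝ) : ℂ) else 0)) :
    (2 * a / (d * ((d : ℝ) - 1))) • Wm + (2 * b / (d * ((d : ℝ) - 1))) • (Wp - Q)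
        + ((1 - a - b) / d) • Q ∈
      convexHull ℝ { A : Matrix (Fin d × Fin d) (Fin d × Fin d) ℂ |
        ∃ U : Matrix.unitaryGroup (Fin d) ℂ,
          A = Matrix.vecMulVec
            ((Matrix.kroneckerMap (· * ·) (U : Matrix (Fin d) (Fin d) ℂ)
              (U : Matrix (Fin d) (Fin d) ℂ)).mulVec ψa)
            (star ((Matrix.kroneckerMap (· * ·) (U : Matrix (Fin d) (Fin d) ℂ)
              (U : Matrix (Fin d) (Fin d) ℂ)).mulVec ψa)) } := by
  classical
  obtain ⟨ha1, ha2⟩ := ha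
  obtain ⟨hb1, hb2⟩ := hb
  set S := { A : Matrix (Fin d × Fin d) (Fin d × Fin d) ℂ |
        ∃ U : Matrix.unitaryGroup (Fin d) ℂ,
          A = Matrix.vecMulVec
            ((Matrix.kroneckerMap (· * ·) (U : Matrix (Fin d) (Fin d) ℂ)
              (U : Matrix (Fin d) (Fin d) ℂ)).mulVec ψa)
            (star ((Matrix.kroneckerMap (· * ·) (U : Matrix (Fin d) (Fin d) ℂ)
              (U : Matrix (Fin d) (Fin d) ℂ)).mulVec ψa)) } with hSdef
  set α := Real.sqrt (1 / 2 + Real.sqrt (a * (1 - a))) with hα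
  set β := Real.sqrt (1 / 2 - Real.sqrt (a * (1 - a))) with hβ
  have haa : 0 ≤ a * (1 - a) := mul_nonneg (by linarith) (by linarith)
  have hs0 := Real.sqrt_nonneg (a * (1 - a))
  have hs2 := Real.sq_sqrt haa
  have hsle : Real.sqrt (a * (1 - a)) ≤ 1 / 2 := by
    rw [Real.sqrt_le_left (by norm_num)]
    nlinarith [sq_nonneg (a - 1 / 2)]
  have hα2 : α ^ 2 = 1 / 2 + Real.sqrt (a * (1 - a)) := Real.sq_sqrt (by linarith)
  have hβ2 : β ^ 2 = 1 / 2 - Real.sqrt (a * (1 - a)) := Real.sq_sqrt (by linarith)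
  have hαβ : α * β = a - 1 / 2 := by
    rw [hα, hβ, ← Real.sqrt_mul (by linarith)]
    rw [show (1 / 2 + Real.sqrt (a * (1 - a))) * (1 / 2 - Real.sqrt (a * (1 - a)))
      = (a - 1 / 2) ^ 2 by nlinarith]
    exact Real.sqrt_sq (by linarith)
  -- the rotation angle
  obtain ⟨c, s, hcs, hm⟩ : ∃ c s : ℝ, c ^ 2 + s ^ 2 = 1 ∧
      (1 - a) * (4 * (c ^ 2 * s ^ 2)) = 1 - a - b := by
    rcases eq_or_lt_of_le ha2 with h1 | h1
    · refine ⟨1, 0, by norm_num, ?_⟩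
      subst h1; linarith
    · have hpos : 0 < 1 - a := by linarith
      have ht0 : 0 ≤ b / (1 - a) := div_nonneg hb1 hpos.le
      have ht1 : b / (1 - a) ≤ 1 := (div_le_one hpos).2 hb2
      have hq0 := Real.sqrt_nonneg (b / (1 - a))
      have hq1 : Real.sqrt (b / (1 - a)) ≤ 1 := by
        rw [Real.sqrt_le_left (by norm_num)]; simpa using ht1
      have hq2 := Real.sq_sqrt ht0
      refine ⟨Real.sqrt ((1 + Real.sqrt (b / (1 - a))) / 2),
        Real.sqrt ((1 - Real.sqrt (b / (1 - a))) / 2), ?_, ?_⟩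
      · rw [Real.sq_sqrt (by linarith), Real.sq_sqrt (by linarith)]; ring
      · rw [Real.sq_sqrt (by linarith), Real.sq_sqrt (by linarith)]
        have : 4 * ((1 + Real.sqrt (b / (1 - a))) / 2 * ((1 - Real.sqrt (b / (1 - a))) / 2))
          = 1 - b / (1 - a) := by linear_combination -hq2
        rw [this]; field_simp
  obtain ⟨p, hp⟩ : ∃ p, p = α * c ^ 2 + β * s ^ 2 := ⟨_, rfl⟩
  obtain ⟨q, hq⟩ : ∃ q, q = -(α * s ^ 2 + β * c ^ 2) := ⟨_, rfl⟩
  obtain ⟨r, hr⟩ : ∃ r, r = (α - β) * c * s := ⟨_, rfl⟩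
  have hsum : α ^ 2 + β ^ 2 = 1 := by rw [hα2, hβ2]; ring
  have hr2 : 2 * r ^ 2 = 1 - a - b := by
    rw [← hm, hr]
    linear_combination 2 * c ^ 2 * s ^ 2 * hsum - 4 * c ^ 2 * s ^ 2 * hαβ
  have hpq : 2 * (p * q) = b - a := by
    rw [hp, hq]
    have h4 : c ^ 4 + s ^ 4 = 1 - 2 * (c ^ 2 * s ^ 2) := by
      linear_combination (c ^ 2 + s ^ 2 + 1) * hcs
    linear_combination -2 * c ^ 2 * s ^ 2 * hsum - 2 * (c ^ 4 + s ^ 4) * hαβ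
      - (2 * a - 1) * h4 - hm
  have hpq2 : p ^ 2 + q ^ 2 = a + b := by
    rw [hp, hq]
    have h4 : c ^ 4 + s ^ 4 = 1 - 2 * (c ^ 2 * s ^ 2) := by
      linear_combination (c ^ 2 + s ^ 2 + 1) * hcs
    linear_combination (c ^ 4 + s ^ 4) * hsum + 4 * c ^ 2 * s ^ 2 * hαβ + h4 - hm
  have hzo : (⟨0, by omega⟩ : Fin d) ≠ ⟨1, by omega⟩ := by simp
  have hS : ∀ x y : Fin d → ℂ, ∑ k, x k * star (x k) = 1 → ∑ k, y k * star (y k) = 1 →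
      ∑ k, y k * star (x k) = 0 →
      Matrix.vecMulVec (fun p : Fin d × Fin d => (α : ℂ) * (x p.1 * y p.2) - β * (y p.1 * x p.2))
        (star (fun p : Fin d × Fin d => (α : ℂ) * (x p.1 * y p.2) - β * (y p.1 * x p.2))) ∈ S := by
    intro x y hx hy hxy
    obtain ⟨U, hU0, hU1⟩ := exists_unitary_cols d _ _ hzo x y hx hy hxy
    refine ⟨U, ?_⟩
    rw [hψa, kron_mulVec d]
    simp only [hU0, hU1]
  let e : Fin d → Fin d → ℂ := fun i k => if k = i then 1 else 0
  have he : ∀ i k, e i k = if k = i then 1 else 0 := fun _ _ => rfl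
  have hA := fun (i j : Fin d) (hij : i ≠ j) =>
    phase_avg d i j hij α β c s hcs S hS e he p q r hp hq hr
  have hd1 : (2 : ℝ) ≤ d := by exact_mod_cast hd
  have hdd : 0 < (d : ℝ) * (d - 1) := mul_pos (by linarith) (by linarith)
  have hcard : ((Finset.univ : Finset (Fin d)).offDiag.card : ℝ) = d * (d - 1) := by
    rw [Finset.offDiag_card, Nat.cast_sub (by simpa using Nat.le_mul_self d)]
    simp; ring
  have hfin := (convex_convexHull ℝ S).sum_mem (t := (Finset.univ : Finset (Fin d)).offDiag)
    (w := fun _ => 1 / ((d : ℝ) * (d - 1)))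
    (z := fun t => Matrix.of (fun P R : Fin d × Fin d =>
      ((r : ℂ) ^ 2 * (e t.1 P.1 * e t.1 P.2 * e t.1 R.1 * e t.1 R.2)
      + (p * (e t.1 P.1 * e t.2 P.2) + q * (e t.2 P.1 * e t.1 P.2)) *
        (p * (e t.1 R.1 * e t.2 R.2) + q * (e t.2 R.1 * e t.1 R.2))
      + (r : ℂ) ^ 2 * (e t.2 P.1 * e t.2 P.2 * e t.2 R.1 * e t.2 R.2))))
    (fun _ _ => by positivity)
    (by rw [Finset.sum_const, nsmul_eq_mul, hcard]; exact mul_one_div_cancel hdd.ne')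
    (fun t ht => hA t.1 t.2 (by simpa using ht))
  convert hfin using 1
  ext ⟨k, l⟩ ⟨m, n⟩
  have hr2' : 2 * (r : ℂ) ^ 2 = 1 - a - b := by exact_mod_cast hr2
  have hpq' : 2 * ((p : ℂ) * q) = b - a := by exact_mod_cast hpq
  have hpq2' : (p : ℂ) ^ 2 + q ^ 2 = a + b := by exact_mod_cast hpq2
  have hdC : (d : ℂ) ≠ 0 := by
    have : (d : ℝ) ≠ 0 := by linarith
    exact_mod_cast this
  have hdC1 : (d : ℂ) - 1 ≠ 0 := by
    have : (d : ℝ) - 1 ≠ 0 := by linarith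
    exact_mod_cast this
  rw [← Finset.smul_sum]
  simp only [Matrix.smul_apply, Matrix.sum_apply, Matrix.of_apply]
  -- turn the off-diagonal sum into full sum minus diagonal sum
  have hoff : ∀ f : Fin d → Fin d → ℂ,
      ∑ t ∈ (Finset.univ : Finset (Fin d)).offDiag, f t.1 t.2
        = ∑ i, ∑ j, f i j - ∑ i, f i i := by
    intro f
    have h1 := Finset.sum_union (Finset.disjoint_diag_offDiag (Finset.univ : Finset (Fin d)))
      (f := fun t => f t.1 t.2)
    rw [Finset.diag_union_offDiag, Finset.sum_product, Finset.sum_diag] at h1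
    rw [h1]; ring
  rw [hoff (fun i j => ((r : ℂ) ^ 2 * (e i k * e i l * e i m * e i n)
      + (p * (e i k * e j l) + q * (e j k * e i l)) *
        (p * (e i m * e j n) + q * (e j m * e i n))
      + (r : ℂ) ^ 2 * (e j k * e j l * e j m * e j n)))]
  have hF : ∑ i, ∑ j, ((r : ℂ) ^ 2 * (e i k * e i l * e i m * e i n)
      + (p * (e i k * e j l) + q * (e j k * e i l)) *
        (p * (e i m * e j n) + q * (e j m * e i n))
      + (r : ℂ) ^ 2 * (e j k * e j l * e j m * e j n))
      = 2 * (r : ℂ) ^ 2 * d * (if k = l ∧ k = m ∧ k = n then 1 else 0)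
        + ((p : ℂ) ^ 2 + q ^ 2) * (if k = m ∧ l = n then 1 else 0)
        + 2 * (p * q) * (if k = n ∧ l = m then 1 else 0) := by
    have h2 : ∀ k m : Fin d, ∑ i, e i k * e i m = if k = m then 1 else 0 := by
      intro k m; simp [he, eq_comm]
    have h4 := sum_four d e he k l m n
    have h5 : ∑ i, e i k * e i l * e i m * (d * e i n)
        = d * if k = l ∧ k = m ∧ k = n then 1 else 0 := by
      rw [← h4, Finset.mul_sum]
      refine Finset.sum_congr rfl fun i _ => ?_
      ring
    have hexp : ∀ i j, ((r : ℂ) ^ 2 * (e i k * e i l * e i m * e i n)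
      + (p * (e i k * e j l) + q * (e j k * e i l)) *
        (p * (e i m * e j n) + q * (e j m * e i n))
      + (r : ℂ) ^ 2 * (e j k * e j l * e j m * e j n))
      = (r : ℂ) ^ 2 * (e i k * e i l * e i m * e i n)
       + (r : ℂ) ^ 2 * (e j k * e j l * e j m * e j n)
       + (p : ℂ) ^ 2 * ((e i k * e i m) * (e j l * e j n))
       + (q : ℂ) ^ 2 * ((e i l * e i n) * (e j k * e j m))
       + (p * q : ℂ) * ((e i k * e i n) * (e j l * e j m))
       + (p * q : ℂ) * ((e i l * e i m) * (e j k * e j n)) := by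
      intro i j; ring
    simp only [hexp, Finset.sum_add_distrib, ← Finset.mul_sum, ← Finset.sum_mul, h2, h4,
      Finset.sum_const, Finset.card_univ, Fintype.card_fin, nsmul_eq_mul]
    rw [h5]
    rw [← mul_ite_and (k = m) (l = n), ← mul_ite_and (k = n) (l = m),
      mul_comm (if l = n then (1 : ℂ) else 0), mul_comm (if l = m then (1 : ℂ) else 0)]
    ring
  have hD : ∑ i, ((r : ℂ) ^ 2 * (e i k * e i l * e i m * e i n)
      + (p * (e i k * e i l) + q * (e i k * e i l)) *
        (p * (e i m * e i n) + q * (e i m * e i n))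
      + (r : ℂ) ^ 2 * (e i k * e i l * e i m * e i n))
      = (2 * (r : ℂ) ^ 2 + ((p : ℂ) ^ 2 + q ^ 2) + 2 * (p * q)) *
        (if k = l ∧ k = m ∧ k = n then 1 else 0) := by
    rw [← sum_four d e he k l m n, Finset.mul_sum]
    refine Finset.sum_congr rfl fun i _ => ?_
    ring
  rw [hF, hD, hr2', hpq', hpq2']
  subst hWm hWp
  simp only [Matrix.add_apply, Matrix.sub_apply, Matrix.smul_apply, hW, hQ, Matrix.one_apply,
    Complex.real_smul, Prod.mk.injEq]
  push_cast
  exact entry_identity d k l m n a b d hdC hdC1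
end

section
/- Fix an integer d ≥ 2, let a ∈ [1/2, 1] and b ∈ [0, 2(1−a)/d]. Then the OO-invariant matrix ρ = (2a/(d(d−1)))·W₋ + b·Φ_d + ((1−a−b)/(d(d+1)/2 − 1))·(𝟙 − Φ_d − W₋) lies in the convex hull, taken in the real vector space of (d²)×(d²) complex matrices, of the Werner orbit orb_wer(ψ_a) = { |(U⊗U)ψ_a⟩⟨(U⊗U)ψ_a| : U a d×d unitary }. -/
open scoped BigOperators

namespace OOAux

abbrev Mat (d : ℕ) := Matrix (Fin d × Fin d) (Fin d × Fin d) ℂ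

/-- sum of selected entries -/
noncomputable def fn {d : ℕ} {ι : Type} [Fintype ι] (e : ι → (Fin d × Fin d) × (Fin d × Fin d)) :
    Mat d →ₗ[ℝ] ℂ where
  toFun M := ∑ x, M (e x).1 (e x).2
  map_add' M N := by simp [Finset.sum_add_distrib]
  map_smul' r M := by simp [Finset.mul_sum]

noncomputable def fT (d : ℕ) : Mat d →ₗ[ℝ] ℂ := fn (fun x : Fin d × Fin d => ((x.1, x.2), (x.1, x.2)))
noncomputable def fW (d : ℕ) : Mat d →ₗ[ℝ] ℂ := fn (fun x : Fin d × Fin d => ((x.1, x.2), (x.2, x.1)))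
noncomputable def fS (d : ℕ) : Mat d →ₗ[ℝ] ℂ := fn (fun x : Fin d × Fin d => ((x.1, x.1), (x.2, x.2)))
noncomputable def fQ (d : ℕ) : Mat d →ₗ[ℝ] ℂ := fn (fun x : Fin d => ((x, x), (x, x)))

/-- the point of the orbit -/
noncomputable def op {d : ℕ} (α β : ℝ) (u v : Fin d → ℂ) : Mat d := fun p q =>
  (α * u p.1 * v p.2 - β * v p.1 * u p.2) * star (α * u q.1 * v q.2 - β * v q.1 * u q.2)

structure ON {d : ℕ} (u v : Fin d → ℂ) : Prop where
  uu : ∑ i, u i * star (u i) = 1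
  vv : ∑ i, v i * star (v i) = 1
  uv : ∑ i, u i * star (v i) = 0

lemma ON.vu {d : ℕ} {u v : Fin d → ℂ} (h : ON u v) : ∑ i, v i * star (u i) = 0 := by
  have := congrArg star h.uv
  simpa [mul_comm] using this

def orb (d : ℕ) (α β : ℝ) : Set (Mat d) := {A | ∃ u v, ON u v ∧ A = op α β u v}

/-- signed permutation action -/
noncomputable def sg {d : ℕ} (s : Fin d → ℤˣ) (i : Fin d) : ℂ := ((s i : ℤ) : ℂ)

lemma sg_sq {d : ℕ} (s : Fin d → ℤˣ) (i : Fin d) : sg s i * sg s i = 1 := by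
  unfold sg
  rcases Int.units_eq_one_or (s i) with h | h <;> simp [h]

lemma sg_star {d : ℕ} (s : Fin d → ℤˣ) (i : Fin d) : star (sg s i) = sg s i := by
  unfold sg
  rcases Int.units_eq_one_or (s i) with h | h <;> simp [h]

noncomputable def act {d : ℕ} (g : Equiv.Perm (Fin d) × (Fin d → ℤˣ)) : Mat d →ₗ[ℝ] Mat d where
  toFun M := Matrix.of fun p q => (sg g.2 p.1 * sg g.2 p.2 * (sg g.2 q.1 * sg g.2 q.2)) *
    M (g.1 p.1, g.1 p.2) (g.1 q.1, g.1 q.2)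
  map_add' M N := by ext p q; simp [mul_add]
  map_smul' r M := by ext p q; simp; ring

lemma act_apply {d : ℕ} (g : Equiv.Perm (Fin d) × (Fin d → ℤˣ)) (M : Mat d) (p q) :
    act g M p q = (sg g.2 p.1 * sg g.2 p.2 * (sg g.2 q.1 * sg g.2 q.2)) *
    M (g.1 p.1, g.1 p.2) (g.1 q.1, g.1 q.2) := rfl

lemma ON.act {d : ℕ} {u v : Fin d → ℂ} (h : ON u v) (g : Equiv.Perm (Fin d) × (Fin d → ℤˣ)) :
    ON (fun i => sg g.2 i * u (g.1 i)) (fun i => sg g.2 i * v (g.1 i)) := by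
  have key : ∀ x y : Fin d → ℂ, ∑ i, sg g.2 i * x (g.1 i) * star (sg g.2 i * y (g.1 i))
      = ∑ i, x i * star (y i) := by
    intro x y
    rw [← Equiv.sum_comp g.1 (fun i => x i * star (y i))]
    refine Finset.sum_congr rfl fun i _ => ?_
    rw [star_mul, sg_star]
    linear_combination (x (g.1 i) * star (y (g.1 i))) * sg_sq g.2 i
  exact ⟨by rw [key, h.uu], by rw [key, h.vv], by rw [key, h.uv]⟩

lemma act_op {d : ℕ} (α β : ℝ) (u v : Fin d → ℂ) (g : Equiv.Perm (Fin d) × (Fin d → ℤˣ)) :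
    act g (op α β u v) = op α β (fun i => sg g.2 i * u (g.1 i)) (fun i => sg g.2 i * v (g.1 i)) := by
  ext p q
  rw [act_apply]
  simp only [op, star_sub, star_mul, sg_star]
  ring

lemma act_hull {d : ℕ} {α β : ℝ} {A : Mat d} (hA : A ∈ convexHull ℝ (orb d α β))
    (g : Equiv.Perm (Fin d) × (Fin d → ℤˣ)) : act g A ∈ convexHull ℝ (orb d α β) := by
  have h1 : act g A ∈ act g '' convexHull ℝ (orb d α β) := ⟨A, hA, rfl⟩
  rw [LinearMap.image_convexHull] at h1
  refine convexHull_mono ?_ h1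
  rintro _ ⟨_, ⟨u, v, h, rfl⟩, rfl⟩
  exact ⟨_, _, h.act g, act_op ..⟩

lemma fT_act {d : ℕ} (g : Equiv.Perm (Fin d) × (Fin d → ℤˣ)) (M : Mat d) : fT d (act g M) = fT d M := by
  change ∑ x : Fin d × Fin d, _ = ∑ x : Fin d × Fin d, _
  conv_rhs => rw [← Equiv.sum_comp (g.1.prodCongr g.1)]
  refine Finset.sum_congr rfl fun x _ => ?_
  simp only [act_apply, Equiv.prodCongr_apply, Prod.map]
  have h1 := sg_sq g.2 x.1
  have h2 := sg_sq g.2 x.2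
  rw [show sg g.2 x.1 * sg g.2 x.2 * (sg g.2 x.1 * sg g.2 x.2) = 1 by
    linear_combination (sg g.2 x.2 * sg g.2 x.2) * h1 + h2, one_mul]

lemma fW_act {d : ℕ} (g : Equiv.Perm (Fin d) × (Fin d → ℤˣ)) (M : Mat d) : fW d (act g M) = fW d M := by
  change ∑ x : Fin d × Fin d, _ = ∑ x : Fin d × Fin d, _
  conv_rhs => rw [← Equiv.sum_comp (g.1.prodCongr g.1)]
  refine Finset.sum_congr rfl fun x _ => ?_
  simp only [act_apply, Equiv.prodCongr_apply, Prod.map]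
  have h1 := sg_sq g.2 x.1
  have h2 := sg_sq g.2 x.2
  rw [show sg g.2 x.1 * sg g.2 x.2 * (sg g.2 x.2 * sg g.2 x.1) = 1 by
    linear_combination (sg g.2 x.2 * sg g.2 x.2) * h1 + h2, one_mul]

lemma fS_act {d : ℕ} (g : Equiv.Perm (Fin d) × (Fin d → ℤˣ)) (M : Mat d) : fS d (act g M) = fS d M := by
  change ∑ x : Fin d × Fin d, _ = ∑ x : Fin d × Fin d, _
  conv_rhs => rw [← Equiv.sum_comp (g.1.prodCongr g.1)]
  refine Finset.sum_congr rfl fun x _ => ?_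
  simp only [act_apply, Equiv.prodCongr_apply, Prod.map, sg_sq, one_mul]

lemma fQ_act {d : ℕ} (g : Equiv.Perm (Fin d) × (Fin d → ℤˣ)) (M : Mat d) : fQ d (act g M) = fQ d M := by
  change ∑ x : Fin d, _ = ∑ x : Fin d, _
  conv_rhs => rw [← Equiv.sum_comp g.1]
  refine Finset.sum_congr rfl fun x _ => ?_
  simp only [act_apply, sg_sq, one_mul]

/-- the twirl -/
noncomputable def tw {d : ℕ} (M : Mat d) : Mat d :=
  ∑ g : Equiv.Perm (Fin d) × (Fin d → ℤˣ),
    ((Fintype.card (Equiv.Perm (Fin d) × (Fin d → ℤˣ)) : ℝ)⁻¹) • act g M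

lemma tw_hull {d : ℕ} {α β : ℝ} {A : Mat d} (hA : A ∈ convexHull ℝ (orb d α β)) :
    tw A ∈ convexHull ℝ (orb d α β) := by
  refine (convex_convexHull ℝ _).sum_mem (fun _ _ => by positivity) ?_ (fun g _ => act_hull hA g)
  rw [Finset.sum_const, Finset.card_univ, nsmul_eq_mul]
  exact mul_inv_cancel₀ (by exact_mod_cast Fintype.card_ne_zero)

lemma fn_tw {d : ℕ} (F : Mat d →ₗ[ℝ] ℂ) (h : ∀ g M, F (act g M) = F M) (M : Mat d) :
    F (tw M) = F M := by
  unfold tw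
  rw [map_sum]
  simp only [map_smul, h]
  rw [Finset.sum_const, Finset.card_univ, ← Nat.cast_smul_eq_nsmul ℝ, smul_smul,
    mul_inv_cancel₀ (by exact_mod_cast Fintype.card_ne_zero), one_smul]

lemma act_tw {d : ℕ} (h : Equiv.Perm (Fin d) × (Fin d → ℤˣ)) (M : Mat d) :
    act h (tw M) = tw M := by
  unfold tw
  rw [map_sum]
  simp only [map_smul]
  rw [← Finset.smul_sum, ← Finset.smul_sum]
  congr 1
  let e : (Equiv.Perm (Fin d) × (Fin d → ℤˣ)) ≃ (Equiv.Perm (Fin d) × (Fin d → ℤˣ)) :=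
    { toFun := fun g => (g.1 * h.1, fun i => h.2 i * g.2 (h.1 i))
      invFun := fun g => (g.1 * h.1⁻¹, fun i => h.2 (h.1⁻¹ i) * g.2 (h.1⁻¹ i))
      left_inv := by
        intro g
        ext i <;> simp [← mul_assoc]
      right_inv := by
        intro g
        ext i <;> simp [← mul_assoc] }
  conv_rhs => rw [← Equiv.sum_comp e]
  refine Finset.sum_congr rfl fun g _ => ?_
  ext p q
  simp only [act_apply, e, Equiv.coe_fn_mk, sg, Equiv.Perm.mul_apply, Units.val_mul, Int.cast_mul]
  ring

lemma perm2 {d : ℕ} {i j k l : Fin d} (h : i ≠ j) (h' : k ≠ l) :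
    ∃ σ : Equiv.Perm (Fin d), σ i = k ∧ σ j = l := by
  refine ⟨Equiv.swap (Equiv.swap i k j) l * Equiv.swap i k, ?_, ?_⟩
  · rw [Equiv.Perm.mul_apply, Equiv.swap_apply_left, Equiv.swap_apply_of_ne_of_ne _ h']
    intro hk
    apply h
    apply (Equiv.swap i k).injective
    rw [Equiv.swap_apply_left, ← hk]
  · simp

lemma inv_diag {d : ℕ} (f : Fin d → ℂ) (hf : ∀ (σ : Equiv.Perm (Fin d)) i, f (σ i) = f i)
    (i : Fin d) : ∑ k, f k = d * f i := by
  rw [Finset.sum_congr rfl (g := fun _ => f i)]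
  · simp
  · intro k _
    rw [← hf (Equiv.swap i k) i, Equiv.swap_apply_left]

lemma inv_off {d : ℕ} (f : Fin d → Fin d → ℂ)
    (hf : ∀ (σ : Equiv.Perm (Fin d)) i j, f (σ i) (σ j) = f i j) {i j : Fin d} (h : i ≠ j) :
    ∑ x : Fin d × Fin d, f x.1 x.2 = d * (d - 1) * f i j + ∑ k, f k k := by
  have h1 : ∀ k l, f k l = f i j + (if k = l then f k k - f i j else 0) := by
    intro k l
    split_ifs with hkl
    · subst hkl; ring
    · obtain ⟨σ, rfl, rfl⟩ := perm2 h hkl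
      rw [hf]; ring
  rw [Fintype.sum_prod_type]
  simp only
  calc _ = ∑ k, ∑ l, (f i j + (if k = l then f k k - f i j else 0)) :=
        Finset.sum_congr rfl fun k _ => Finset.sum_congr rfl fun l _ => h1 k l
    _ = _ := by
        simp [Finset.sum_add_distrib]
        ring

lemma sg_one {d : ℕ} (i : Fin d) : sg 1 i = 1 := by simp [sg]

lemma tw_perm {d : ℕ} (M : Mat d) (σ : Equiv.Perm (Fin d)) (i j k l : Fin d) :
    tw M (σ i, σ j) (σ k, σ l) = tw M (i, j) (k, l) := by
  conv_rhs => rw [← act_tw (σ, 1) M, act_apply]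
  simp [sg_one]

lemma tw_zero {d : ℕ} (M : Mat d) (i j k l : Fin d) (h1 : ¬ (i = j ∧ k = l))
    (h2 : ¬ (i = k ∧ j = l)) (h3 : ¬ (i = l ∧ j = k)) : tw M (i, j) (k, l) = 0 := by
  have key : ∀ s : Fin d → ℤˣ, sg s i * sg s j * (sg s k * sg s l) = -1 →
      tw M (i, j) (k, l) = 0 := by
    intro s hs
    have := congrFun (congrFun (act_tw (1, s) M) (i, j)) (k, l)
    rw [act_apply] at this
    simp only [hs] at this
    simp only [Equiv.Perm.one_apply] at this
    linear_combination (-1/2) * this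
  have hsg : ∀ m n : Fin d, sg (Function.update 1 m (-1)) n = if n = m then -1 else 1 := by
    intro m n
    by_cases h : n = m
    · subst h; simp [sg]
    · simp [sg, h]
  by_cases hi : i ≠ j ∧ i ≠ k ∧ i ≠ l
  · apply key (Function.update 1 i (-1))
    simp [hsg, hi.1.symm, hi.2.1.symm, hi.2.2.symm]
  · by_cases hij : i = j
    · subst hij
      apply key (Function.update 1 k (-1))
      have : l ≠ k := fun h => h1 ⟨rfl, h.symm⟩
      simp only [hsg, this, if_true, if_false]
      split_ifs <;> norm_num
    · by_cases hik : i = k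
      · subst hik
        apply key (Function.update 1 j (-1))
        have : l ≠ j := fun h => h2 ⟨rfl, h.symm⟩
        simp [hsg, hij, this]
      · have hil : i = l := by tauto
        subst hil
        apply key (Function.update 1 j (-1))
        have : k ≠ j := fun h => h3 ⟨rfl, h.symm⟩
        simp [hsg, hij, this]

lemma tw_T {d : ℕ} (M : Mat d) {i j : Fin d} (h : i ≠ j) :
    fT d M = d * (d - 1) * tw M (i, j) (i, j) + fQ d M := by
  rw [← fn_tw _ fT_act M, ← fn_tw _ fQ_act M]
  exact inv_off (fun i j => tw M (i, j) (i, j)) (fun σ i j => tw_perm M σ i j i j) h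

lemma tw_W {d : ℕ} (M : Mat d) {i j : Fin d} (h : i ≠ j) :
    fW d M = d * (d - 1) * tw M (i, j) (j, i) + fQ d M := by
  rw [← fn_tw _ fW_act M, ← fn_tw _ fQ_act M]
  exact inv_off (fun i j => tw M (i, j) (j, i)) (fun σ i j => tw_perm M σ i j j i) h

lemma tw_S {d : ℕ} (M : Mat d) {i j : Fin d} (h : i ≠ j) :
    fS d M = d * (d - 1) * tw M (i, i) (j, j) + fQ d M := by
  rw [← fn_tw _ fS_act M, ← fn_tw _ fQ_act M]
  exact inv_off (fun i j => tw M (i, i) (j, j)) (fun σ i j => tw_perm M σ i i j j) h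

lemma tw_Q {d : ℕ} (M : Mat d) (i : Fin d) :
    fQ d M = d * tw M (i, i) (i, i) := by
  rw [← fn_tw _ fQ_act M]
  exact inv_diag (fun i => tw M (i, i) (i, i)) (fun σ i => tw_perm M σ i i i i) i

lemma sum4 {d : ℕ} (f g : Fin d → ℂ) : ∑ x : Fin d × Fin d, f x.1 * g x.2 = (∑ i, f i) * ∑ j, g j := by
  rw [Fintype.sum_prod_type, Finset.sum_mul_sum]

lemma fT_op {d : ℕ} (α β : ℝ) {u v : Fin d → ℂ} (h : ON u v) :
    fT d (op α β u v) = α ^ 2 + β ^ 2 := by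
  change ∑ x : Fin d × Fin d, _ = _
  have : ∀ x : Fin d × Fin d, op α β u v (x.1, x.2) (x.1, x.2) =
      α ^ 2 * ((u x.1 * star (u x.1)) * (v x.2 * star (v x.2)))
      - α * β * ((u x.1 * star (v x.1)) * (v x.2 * star (u x.2)))
      - α * β * ((v x.1 * star (u x.1)) * (u x.2 * star (v x.2)))
      + β ^ 2 * ((v x.1 * star (v x.1)) * (u x.2 * star (u x.2))) := by
    intro x
    simp only [op, star_sub, star_mul, Complex.star_def, Complex.conj_ofReal]
    ring
  simp only [this, Finset.sum_add_distrib, Finset.sum_sub_distrib, ← Finset.mul_sum]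
  rw [sum4 (fun i => u i * star (u i)) (fun i => v i * star (v i)),
    sum4 (fun i => u i * star (v i)) (fun i => v i * star (u i)),
    sum4 (fun i => v i * star (u i)) (fun i => u i * star (v i)),
    sum4 (fun i => v i * star (v i)) (fun i => u i * star (u i)), h.uu, h.vv, h.uv, h.vu]
  ring

lemma fW_op {d : ℕ} (α β : ℝ) {u v : Fin d → ℂ} (h : ON u v) :
    fW d (op α β u v) = - (2 * (α * β)) := by
  change ∑ x : Fin d × Fin d, _ = _
  have : ∀ x : Fin d × Fin d, op α β u v (x.1, x.2) (x.2, x.1) =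
      α ^ 2 * ((u x.1 * star (v x.1)) * (v x.2 * star (u x.2)))
      - α * β * ((u x.1 * star (u x.1)) * (v x.2 * star (v x.2)))
      - α * β * ((v x.1 * star (v x.1)) * (u x.2 * star (u x.2)))
      + β ^ 2 * ((v x.1 * star (u x.1)) * (u x.2 * star (v x.2))) := by
    intro x
    simp only [op, star_sub, star_mul, Complex.star_def, Complex.conj_ofReal]
    ring
  simp only [this, Finset.sum_add_distrib, Finset.sum_sub_distrib, ← Finset.mul_sum]
  rw [sum4 (fun i => u i * star (u i)) (fun i => v i * star (v i)),
    sum4 (fun i => u i * star (v i)) (fun i => v i * star (u i)),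
    sum4 (fun i => v i * star (u i)) (fun i => u i * star (v i)),
    sum4 (fun i => v i * star (v i)) (fun i => u i * star (u i)), h.uu, h.vv, h.uv, h.vu]
  ring

lemma fS_op {d : ℕ} (α β : ℝ) (u v : Fin d → ℂ) :
    fS d (op α β u v) = (α - β) ^ 2 * ((∑ i, u i * v i) * star (∑ i, u i * v i)) := by
  change ∑ x : Fin d × Fin d, _ = _
  have : ∀ x : Fin d × Fin d, op α β u v (x.1, x.1) (x.2, x.2) =
      (α - β) ^ 2 * ((u x.1 * v x.1) * star (u x.2 * v x.2)) := by
    intro x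
    simp only [op, star_sub, star_mul, Complex.star_def, Complex.conj_ofReal]
    ring
  simp only [this, ← Finset.mul_sum]
  rw [sum4 (fun i => u i * v i) (fun i => star (u i * v i)), star_sum]

lemma fQ_op {d : ℕ} (α β : ℝ) (u v : Fin d → ℂ) :
    fQ d (op α β u v) = (α - β) ^ 2 * ∑ i, (u i * star (u i)) * (v i * star (v i)) := by
  change ∑ x : Fin d, _ = _
  rw [Finset.mul_sum]
  refine Finset.sum_congr rfl fun x _ => ?_
  simp only [op, star_sub, star_mul, Complex.star_def, Complex.conj_ofReal]
  ring

/-- vector supported on two coordinates -/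
def v2 {d : ℕ} (z o : Fin d) (x y : ℂ) : Fin d → ℂ := fun i => if i = z then x else if i = o then y else 0

lemma v2_sum {d : ℕ} {z o : Fin d} (h : z ≠ o) (x y x' y' : ℂ) (F : ℂ → ℂ → ℂ) (hF : F 0 0 = 0) :
    ∑ i, F (v2 z o x y i) (v2 z o x' y' i) = F x x' + F y y' := by
  rw [Fintype.sum_eq_add z o h]
  · simp [v2, h.symm]
  · rintro i ⟨h1, h2⟩
    simp [v2, h1, h2, hF]

lemma exists_r : ∃ r : ℂ, r * r = 1 / 2 ∧ star r = r := by
  refine ⟨((Real.sqrt (1/2) : ℝ) : ℂ), ?_, by simp only [Complex.star_def, Complex.conj_ofReal]⟩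
  rw [← Complex.ofReal_mul, Real.mul_self_sqrt (by norm_num)]
  norm_num

lemma v2_on {d : ℕ} {z o : Fin d} (h : z ≠ o) {x y x' y' : ℂ} (h1 : x * star x + y * star y = 1)
    (h2 : x' * star x' + y' * star y' = 1) (h3 : x * star x' + y * star y' = 0) :
    ON (v2 z o x y) (v2 z o x' y') := by
  refine ⟨?_, ?_, ?_⟩
  · rw [v2_sum h x y x' y' (fun a _ => a * star a) (by simp), h1]
  · rw [v2_sum h x y x' y' (fun _ a => a * star a) (by simp), h2]
  · rw [v2_sum h x y x' y' (fun a b => a * star b) (by simp), h3]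

/-- existence of pair with given invariants -/
def EX (d : ℕ) (s q : ℂ) : Prop := ∃ u v : Fin d → ℂ, ON u v ∧
  (∑ i, u i * v i) * star (∑ i, u i * v i) = s ∧ ∑ i, (u i * star (u i)) * (v i * star (v i)) = q

lemma EX_v2 {d : ℕ} {z o : Fin d} (h : z ≠ o) {x y x' y' s q : ℂ} (h1 : x * star x + y * star y = 1)
    (h2 : x' * star x' + y' * star y' = 1) (h3 : x * star x' + y * star y' = 0)
    (h4 : (x * x' + y * y') * star (x * x' + y * y') = s)
    (h5 : x * star x * (x' * star x') + y * star y * (y' * star y') = q) : EX d s q := by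
  refine ⟨_, _, v2_on h h1 h2 h3, ?_, ?_⟩
  · rw [v2_sum h x y x' y' (fun a b => a * b) (by simp), h4]
  · rw [v2_sum h x y x' y' (fun a b => a * star a * (b * star b)) (by simp), h5]

lemma EX0 {d : ℕ} {z o : Fin d} (h : z ≠ o) : EX d 0 0 := by
  apply EX_v2 h (x := 1) (y := 0) (x' := 0) (y' := 1) <;> simp

lemma EX1 {d : ℕ} {z o : Fin d} (h : z ≠ o) : EX d 0 (1/2) := by
  obtain ⟨r, hr, hs⟩ := exists_r
  apply EX_v2 h (x := r) (y := r) (x' := r) (y' := -r) <;>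
    simp only [star_neg, star_add, star_mul, hs, hr, mul_neg, neg_mul] <;> norm_num

lemma EX2 {d : ℕ} {z o : Fin d} (h : z ≠ o) : EX d 1 (1/2) := by
  obtain ⟨r, hr, hs⟩ := exists_r
  have hI := Complex.I_mul_I
  have e : r * Complex.I * (r * Complex.I) = -(1/2) := by
    linear_combination (r * r) * hI - hr
  apply EX_v2 h (x := r) (y := r * Complex.I) (x' := r) (y' := -(r * Complex.I)) <;>
    simp only [star_neg, star_add, star_mul, hs, hr, mul_neg, neg_mul, Complex.star_def, Complex.conj_I, mul_comm Complex.I r, neg_neg, e] <;> norm_num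
  rw [map_ofNat]; norm_num

lemma EX3 {d : ℕ} (hd : 2 ≤ d) : EX d 1 (1/d) := by
  have hd0 : (d : ℂ) ≠ 0 := by exact_mod_cast (by omega : d ≠ 0)
  obtain ⟨r, hr, hs⟩ : ∃ r : ℂ, r * r = (d : ℂ)⁻¹ ∧ star r = r := by
    refine ⟨((Real.sqrt ((d : ℝ)⁻¹) : ℝ) : ℂ), ?_, by simp only [Complex.star_def, Complex.conj_ofReal]⟩
    rw [← Complex.ofReal_mul, Real.mul_self_sqrt (by positivity)]
    norm_num
  obtain ⟨w, hw, hww⟩ : ∃ w : ℂ, IsPrimitiveRoot (w ^ 2) d ∧ w * star w = 1 := by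
    refine ⟨Complex.exp (Real.pi * Complex.I / d), ?_, ?_⟩
    · rw [← Complex.exp_nat_mul]
      convert Complex.isPrimitiveRoot_exp d (by omega) using 2
      push_cast; ring
    · rw [Complex.star_def, ← Complex.exp_conj, ← Complex.exp_add]
      simp
      ring_nf
      simp
  have hwk : ∀ k : ℕ, w ^ k * star w ^ k = 1 := fun k => by rw [← mul_pow, hww, one_pow]
  have e1 : ∀ k : Fin d, r * w ^ (k : ℕ) * (r * star w ^ (k : ℕ)) = (d : ℂ)⁻¹ := fun k => by
    linear_combination (r * r) * hwk k + hr
  have e2 : ∀ k : Fin d, r * star w ^ (k : ℕ) * (r * w ^ (k : ℕ)) = (d : ℂ)⁻¹ := fun k => by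
    linear_combination (r * r) * hwk k + hr
  have e3 : ∀ k : Fin d, r * w ^ (k : ℕ) * (r * w ^ (k : ℕ)) = (d : ℂ)⁻¹ * (w ^ 2) ^ (k : ℕ) := fun k => by
    rw [← hr, ← pow_mul]; ring
  have hu : ∀ k : Fin d, star (r * w ^ (k : ℕ)) = r * star w ^ (k : ℕ) := fun k => by
    rw [star_mul, hs, star_pow, mul_comm]
  have hv : ∀ k : Fin d, star (r * star w ^ (k : ℕ)) = r * w ^ (k : ℕ) := fun k => by
    rw [star_mul, hs, star_pow, star_star, mul_comm]
  refine ⟨fun k => r * w ^ (k : ℕ), fun k => r * star w ^ (k : ℕ), ⟨?_, ?_, ?_⟩, ?_, ?_⟩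
  · simp only [hu, e1]; simp [hd0]
  · simp only [hv, e2]; simp [hd0]
  · simp only [hv, e3]
    rw [← Finset.mul_sum, Fin.sum_univ_eq_sum_range (fun k => (w ^ 2) ^ k), hw.geom_sum_eq_zero (by omega), mul_zero]
  · simp only [e1]; simp [hd0]
  · simp only [hu, hv, e1, e2]; simp [hd0]

lemma hull_exists {d : ℕ} (hd : 2 ≤ d) (α β t : ℝ) (ht0 : 0 ≤ t) (ht1 : t ≤ 1)
    (hab : α ^ 2 + β ^ 2 = 1) : ∃ A ∈ convexHull ℝ (orb d α β),
    fT d A = 1 ∧ fW d A = - (2 * (α * β)) ∧ fS d A = (α - β) ^ 2 * t ∧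
      fQ d A = (α - β) ^ 2 * ((1 + t) / (d + 2)) := by
  have hne : (⟨0, by omega⟩ : Fin d) ≠ ⟨1, by omega⟩ := by simp
  have hab' : (α : ℂ) ^ 2 + (β : ℂ) ^ 2 = 1 := by exact_mod_cast hab
  have hd0 : (d : ℂ) ≠ 0 := by exact_mod_cast (by omega : d ≠ 0)
  have hd2 : (d : ℂ) + 2 ≠ 0 := by exact_mod_cast (by omega : d + 2 ≠ 0)
  have hd2' : (d : ℝ) + 2 ≠ 0 := by positivity
  obtain ⟨u0, v0, h0, s0, q0⟩ := EX0 hne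
  obtain ⟨u1, v1, h1, s1, q1⟩ := EX1 hne
  obtain ⟨u2, v2, h2, s2, q2⟩ := EX2 hne
  obtain ⟨u3, v3, h3, s3, q3⟩ := EX3 hd
  have m : ∀ {u v : Fin d → ℂ}, ON u v → op α β u v ∈ convexHull ℝ (orb d α β) :=
    fun h => subset_convexHull ℝ _ ⟨_, _, h, rfl⟩
  have hc := convex_convexHull ℝ (orb d α β)
  have hl : (d : ℝ) / (d + 2) + 2 / (d + 2) = 1 := by field_simp
  have hl' : (2 : ℝ) / (d + 2) + d / (d + 2) = 1 := by field_simp; ring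
  have mA := hc (m h0) (m h1) (by positivity) (by positivity) hl
  have mB := hc (m h2) (m h3) (by positivity) (by positivity) hl'
  refine ⟨_, hc mA mB (a := 1 - t) (b := t) (by linarith) ht0 (by ring), ?_, ?_, ?_, ?_⟩
  · simp only [map_add, map_smul, fT_op α β h0, fT_op α β h1, fT_op α β h2, fT_op α β h3, hab',
      Complex.real_smul]
    push_cast
    field_simp
    ring
  · simp only [map_add, map_smul, fW_op α β h0, fW_op α β h1, fW_op α β h2, fW_op α β h3,
      Complex.real_smul]
    push_cast
    field_simp
    ring
  · simp only [map_add, map_smul, fS_op, s0, s1, s2, s3, Complex.real_smul]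
    push_cast
    field_simp
    ring
  · simp only [map_add, map_smul, fQ_op, q0, q1, q2, q3, Complex.real_smul]
    push_cast
    field_simp
    ring

lemma exists_unitary {d : ℕ} {z o : Fin d} (hzo : z ≠ o) {u v : Fin d → ℂ} (h : ON u v) :
    ∃ U : Matrix.unitaryGroup (Fin d) ℂ, ∀ i, (U : Matrix (Fin d) (Fin d) ℂ) i z = u i ∧
      (U : Matrix (Fin d) (Fin d) ℂ) i o = v i := by
  let w : Fin d → EuclideanSpace ℂ (Fin d) := fun k => if k = z then WithLp.toLp 2 u else WithLp.toLp 2 v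
  have huu : inner ℂ (WithLp.toLp 2 u) (WithLp.toLp 2 u) = (1 : ℂ) := by
    rw [← h.uu, PiLp.inner_apply]; rfl
  have hvv : inner ℂ (WithLp.toLp 2 v) (WithLp.toLp 2 v) = (1 : ℂ) := by
    rw [← h.vv, PiLp.inner_apply]; rfl
  have hvu : inner ℂ (WithLp.toLp 2 v) (WithLp.toLp 2 u) = (0 : ℂ) := by
    rw [← h.uv, PiLp.inner_apply]; rfl
  have huv : inner ℂ (WithLp.toLp 2 u) (WithLp.toLp 2 v) = (0 : ℂ) := by
    rw [← h.vu, PiLp.inner_apply]; rfl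
  have hw : Orthonormal ℂ (Set.domRestrict ({z, o} : Set (Fin d)) w) := by
    rw [orthonormal_iff_ite]
    rintro ⟨i, hi⟩ ⟨j, hj⟩
    change inner ℂ (w i) (w j) = _
    have e1 : w z = WithLp.toLp 2 u := if_pos rfl
    have e2 : w o = WithLp.toLp 2 v := if_neg hzo.symm
    simp only [Subtype.mk.injEq]
    rcases hi with hi | hi <;> rcases hj with hj | hj
    · rw [hi, hj, e1, huu, if_pos rfl]
    · rw [hi, hj, e1, e2, huv, if_neg hzo]
    · rw [hi, hj, e1, e2, hvu, if_neg hzo.symm]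
    · rw [hi, hj, e2, hvv, if_pos rfl]
  obtain ⟨b, hb⟩ := hw.exists_orthonormalBasis_extension_of_card_eq (by simp)
  refine ⟨⟨Matrix.of fun i k => b k i, ?_⟩, ?_⟩
  · rw [Matrix.mem_unitaryGroup_iff']
    ext k l
    have := orthonormal_iff_ite.1 b.orthonormal k l
    rw [Matrix.mul_apply, Matrix.one_apply, ← this]
    simp [PiLp.inner_apply, Matrix.star_apply, mul_comm]
  · intro i
    have h1 := hb z (by simp)
    have h2 := hb o (by simp)
    simp [h1, h2, w, hzo.symm]

end OOAux

/-- For `a ∈ [1/2,1]` and `b ∈ [0, 2(1−a)/d]`, the OO-invariant state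
`ρ = (2a/(d(d−1)))W₋ + bΦ_d + ((1−a−b)/(d(d+1)/2 − 1))(𝟙 − Φ_d − W₋)` lies in the
convex hull of the Werner orbit of the minimizing pure state
`ψ_a = √(1/2+√(a(1−a)))|01⟩ − √(1/2−√(a(1−a)))|10⟩`. -/
theorem ooInvariant_mem_convexHull_wernerOrbit (d : ℕ) (hd : 2 ≤ d)
    (a b : ℝ) (ha : a ∈ Set.Icc (1 / 2 : ℝ) 1)
    (hb : b ∈ Set.Icc (0 : ℝ) (2 * (1 - a) / d))
    (W : Matrix (Fin d × Fin d) (Fin d × Fin d) ℂ)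
    (hW : ∀ p q, W p q = if p.1 = q.2 ∧ p.2 = q.1 then 1 else 0)
    (Wm : Matrix (Fin d × Fin d) (Fin d × Fin d) ℂ)
    (hWm : Wm = (2 : ℝ)⁻¹ • (1 - W))
    (Φ : Matrix (Fin d × Fin d) (Fin d × Fin d) ℂ)
    (hΦ : ∀ p q, Φ p q = if p.1 = p.2 ∧ q.1 = q.2 then ((d : ℂ))⁻¹ else 0)
    (ψa : Fin d × Fin d → ℂ)
    (hψa : ψa = fun p =>
      (if p = ((⟨0, by omega⟩ : Fin d), (⟨1, by omega⟩ : Fin d)) then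
          ((Real.sqrt (1 / 2 + Real.sqrt (a * (1 - a))) : ℝ) : ℂ) else 0)
      - (if p = ((⟨1, by omega⟩ : Fin d), (⟨0, by omega⟩ : Fin d)) then
          ((Real.sqrt (1 / 2 - Real.sqrt (a * (1 - a))) : ℝ) : ℂ) else 0)) :
    (2 * a / (d * ((d : ℝ) - 1))) • Wm + b • Φ
        + ((1 - a - b) / ((d : ℝ) * ((d : ℝ) + 1) / 2 - 1)) • (1 - Φ - Wm) ∈
      convexHull ℝ { A : Matrix (Fin d × Fin d) (Fin d × Fin d) ℂ |
        ∃ U : Matrix.unitaryGroup (Fin d) ℂ,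
          A = Matrix.vecMulVec
            ((Matrix.kroneckerMap (· * ·) (U : Matrix (Fin d) (Fin d) ℂ)
              (U : Matrix (Fin d) (Fin d) ℂ)).mulVec ψa)
            (star ((Matrix.kroneckerMap (· * ·) (U : Matrix (Fin d) (Fin d) ℂ)
              (U : Matrix (Fin d) (Fin d) ℂ)).mulVec ψa)) } := by
  obtain ⟨ha1, ha2⟩ := ha
  obtain ⟨hb1, hb2⟩ := hb
  have hzo : (⟨0, by omega⟩ : Fin d) ≠ ⟨1, by omega⟩ := by simp
  set z : Fin d := ⟨0, by omega⟩ with hz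
  set o : Fin d := ⟨1, by omega⟩ with ho
  have hx : Real.sqrt (a * (1 - a)) ≤ 1 / 2 := by
    rw [Real.sqrt_le_left (by norm_num)]
    nlinarith [sq_nonneg (a - 1/2)]
  have hx0 := Real.sqrt_nonneg (a * (1 - a))
  have hxx : Real.sqrt (a * (1 - a)) ^ 2 = a * (1 - a) := Real.sq_sqrt (by nlinarith)
  set x := Real.sqrt (a * (1 - a)) with hxdef
  have hα2 : Real.sqrt (1 / 2 + x) ^ 2 = 1 / 2 + x := Real.sq_sqrt (by linarith)
  have hβ2 : Real.sqrt (1 / 2 - x) ^ 2 = 1 / 2 - x := Real.sq_sqrt (by linarith)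
  have hαβ : Real.sqrt (1 / 2 + x) * Real.sqrt (1 / 2 - x) = a - 1 / 2 := by
    rw [← Real.sqrt_mul (by linarith)]
    rw [show (1 / 2 + x) * (1 / 2 - x) = (a - 1/2) ^ 2 by nlinarith]
    exact Real.sqrt_sq (by linarith)
  set α := Real.sqrt (1 / 2 + x)
  set β := Real.sqrt (1 / 2 - x)
  have hd2 : (2 : ℝ) ≤ d := by exact_mod_cast hd
  obtain ⟨t, ht0, ht1, ht⟩ : ∃ t : ℝ, 0 ≤ t ∧ t ≤ 1 ∧ d * b = 2 * (1 - a) * t := by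
    rw [le_div_iff₀ (by linarith)] at hb2
    rcases eq_or_lt_of_le ha2 with h | h
    · refine ⟨0, le_rfl, zero_le_one, ?_⟩
      have : b * d = 0 := le_antisymm (by rw [h] at hb2; linarith) (by positivity)
      linarith
    · have h' : 0 < 2 * (1 - a) := by linarith
      refine ⟨d * b / (2 * (1 - a)), by positivity, ?_, ?_⟩
      · rw [div_le_one h']; linarith
      · field_simp
  obtain ⟨A, hA, hT, hWA, hS, hQ⟩ := OOAux.hull_exists hd α β t ht0 ht1 (by rw [hα2, hβ2]; ring)
  have hδ : ((α : ℂ) - β) ^ 2 = 2 * (1 - a) := by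
    have : (α - β) ^ 2 = 2 * (1 - a) := by nlinarith
    exact_mod_cast this
  have hαβ' : (α : ℂ) * β = a - 1 / 2 := by
    have := congrArg (fun r : ℝ => (r : ℂ)) hαβ
    push_cast at this
    exact this
  have ht' : (d : ℂ) * b = 2 * (1 - a) * t := by exact_mod_cast ht
  rw [hδ, ← ht'] at hS
  rw [hαβ'] at hWA
  have hdc0 : (d : ℂ) ≠ 0 := by exact_mod_cast (by omega : d ≠ 0)
  have hdc2 : (d : ℂ) + 2 ≠ 0 := by exact_mod_cast (by omega : d + 2 ≠ 0)
  have hdc1 : (d : ℂ) - 1 ≠ 0 := by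
    rw [sub_ne_zero]; exact_mod_cast (by omega : d ≠ 1)
  replace hQ : OOAux.fQ d A = (2 * (1 - a) + d * b) / (d + 2) := by
    rw [hQ, hδ, ht']; field_simp
  have hdd : (d : ℂ) * (d + 1) / 2 - 1 = (d - 1) * (d + 2) / 2 := by ring
  have eQ : ∀ i, OOAux.tw A (i, i) (i, i) = ((2 * (1 - a) + d * b) / (d + 2)) / d := by
    intro i
    rw [← hQ, OOAux.tw_Q A i]; field_simp
  have eT : ∀ i j, i ≠ j → OOAux.tw A (i, j) (i, j) =
      (1 - (2 * (1 - a) + d * b) / (d + 2)) / (d * (d - 1)) := by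
    intro i j h
    have := OOAux.tw_T A h
    rw [hT, hQ] at this
    rw [eq_div_iff (mul_ne_zero hdc0 hdc1)]
    linear_combination -this
  have eW : ∀ i j, i ≠ j → OOAux.tw A (i, j) (j, i) =
      (-(2 * (a - 1 / 2)) - (2 * (1 - a) + d * b) / (d + 2)) / (d * (d - 1)) := by
    intro i j h
    have := OOAux.tw_W A h
    rw [hWA, hQ] at this
    rw [eq_div_iff (mul_ne_zero hdc0 hdc1)]
    linear_combination -this
  have eS : ∀ i j, i ≠ j → OOAux.tw A (i, i) (j, j) =
      (d * b - (2 * (1 - a) + d * b) / (d + 2)) / (d * (d - 1)) := by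
    intro i j h
    have := OOAux.tw_S A h
    rw [hS, hQ] at this
    rw [eq_div_iff (mul_ne_zero hdc0 hdc1)]
    linear_combination -this
  have main : (2 * a / (d * ((d : ℝ) - 1))) • Wm + b • Φ
        + ((1 - a - b) / ((d : ℝ) * ((d : ℝ) + 1) / 2 - 1)) • (1 - Φ - Wm) = OOAux.tw A := by
    ext ⟨i, j⟩ ⟨k, l⟩
    simp only [hWm, Matrix.add_apply, Matrix.smul_apply, Matrix.sub_apply, hW, hΦ,
      Complex.real_smul, Matrix.one_apply, Prod.mk.injEq]
    push_cast
    rw [hdd]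
    by_cases h1 : i = j ∧ k = l
    · obtain ⟨rfl, rfl⟩ := h1
      by_cases h : i = k
      · subst h
        rw [eQ]
        simp only [and_self, if_true]
        field_simp
        ring
      · rw [eS i k h]
        simp only [and_self, if_true, h, if_false]
        field_simp
        ring
    · by_cases h2 : i = k ∧ j = l
      · obtain ⟨rfl, rfl⟩ := h2
        have h : i ≠ j := fun h => h1 ⟨h, h⟩
        rw [eT i j h]
        simp only [and_self, if_true, h, h.symm, if_false]
        field_simp
        ring
      · by_cases h3 : i = l ∧ j = k
        · obtain ⟨rfl, rfl⟩ := h3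
          have h : i ≠ j := fun h => h1 ⟨h, h.symm⟩
          rw [eW i j h]
          simp only [and_self, if_true, h, h.symm, if_false]
          field_simp
          ring
        · rw [OOAux.tw_zero A i j k l h1 h2 h3]
          simp [h1, h2, h3]
  rw [main]
  refine convexHull_mono ?_ (OOAux.tw_hull hA)
  rintro _ ⟨u, v, huv, rfl⟩
  obtain ⟨U, hU⟩ := OOAux.exists_unitary hzo huv
  refine ⟨U, ?_⟩
  have hvec : (Matrix.kroneckerMap (· * ·) (U : Matrix (Fin d) (Fin d) ℂ)
              (U : Matrix (Fin d) (Fin d) ℂ)).mulVec ψa =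
      fun p => α * u p.1 * v p.2 - β * v p.1 * u p.2 := by
    ext p
    rw [Matrix.mulVec, dotProduct, hψa]
    simp only [mul_sub, Finset.sum_sub_distrib, mul_ite, mul_zero, Finset.sum_ite_eq',
      Finset.mem_univ, if_true, Matrix.kroneckerMap_apply, (hU _).1, (hU _).2]
    ring
  rw [hvec]
  ext p q
  simp [OOAux.op, Matrix.vecMulVec_apply]
end

section
/- Fix an integer d ≥ 2, let b ∈ [1/d, 1], and let λ : Fin d → ℝ satisfy λᵢ ≥ 0, Σᵢ λᵢ = 1 and Σᵢ √λᵢ = √(d·b). Assume there exist an integer k with 1 ≤ k ≤ d−1 and a real t such that either (i) λᵢ = t for i < k and λᵢ = (1−k·t)/(d−k) for i ≥ k, with t ≥ (1−k·t)/(d−k) ≥ 0, or (ii) λᵢ = t for i < k, λ_k = 1−k·t, and λᵢ = 0 for i > k, with t ≥ 1−k·t ≥ 0. Set φ := Σᵢ √λᵢ·e_{(i,i)}. Then for every a ∈ [0, d(1−b)/(2(d−1))], the matrix ρ = (2a/(d(d−1)))·W₋ + b·Φ_d + ((1−a−b)/(d(d+1)/2 − 1))·(𝟙 − Φ_d − W₋)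 lies in the convex hull, taken in the real vector space of (d²)×(d²) complex matrices, of the isotropic orbit orb_iso(φ) = { |(U ⊗ conj(U))φ⟩⟨(U ⊗ conj(U))φ| : U a d×d unitary }. -/
open scoped BigOperators

lemma ineq_sorted (n : ℕ) (y : Fin (n+1) → ℝ) (hy : Antitone y) :
    (n : ℝ) * ∑ i, y i * y (Fin.rev i) ≤ (∑ i, y i)^2 - ∑ i, y i ^2 := by
  wlog hm : ∃ m : Fin (n+1), y m = 0 ∧ ∀ i, i ≤ Fin.rev i → i ≤ m ∧ m ≤ Fin.rev i generalizing y
  · set m : Fin (n+1) := ⟨n/2, by omega⟩ with hmdef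
    have := this (fun i => y i - y m) (fun i j h => by have := hy h; simpa using this)
      ⟨m, by simp, fun i hi => by
        simp only [Fin.le_def, Fin.val_rev, hmdef] at hi ⊢
        omega⟩
    have e1 : ∑ i, (y i - y m) * (y (Fin.rev i) - y m)
        = ∑ i, y i * y (Fin.rev i) - 2 * y m * ∑ i, y i + (n+1) * y m ^2 := by
      have : ∑ i, y (Fin.rev i) = ∑ i, y i := Equiv.sum_comp Fin.revPerm y
      have h2 : ∀ i, (y i - y m) * (y (Fin.rev i) - y m)
        = y i * y (Fin.rev i) - y m * y i - y m * y (Fin.rev i) + y m ^2 := fun i => by ring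
      simp only [h2, Finset.sum_add_distrib, Finset.sum_sub_distrib, ← Finset.mul_sum, this]
      simp
      ring
    have e2 : ∑ i, (y i - y m) = ∑ i, y i - (n+1) * y m := by
      simp [Finset.sum_sub_distrib]
    have e3 : ∑ i, (y i - y m)^2 = ∑ i, y i ^2 - 2 * y m * ∑ i, y i + (n+1) * y m ^2 := by
      have h2 : ∀ i, (y i - y m)^2 = y i ^2 - 2 * y m * y i + y m ^2 := fun i => by ring
      simp only [h2, Finset.sum_add_distrib, Finset.sum_sub_distrib, ← Finset.mul_sum]
      simp
    simp only [e1, e2, e3] at this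
    nlinarith
  obtain ⟨m, hm0, hm⟩ := hm
  set p : Fin (n+1) → ℝ := fun i => max (y i) 0 with hp
  set q : Fin (n+1) → ℝ := fun i => max (-y i) 0 with hq
  have hp0 : ∀ i, 0 ≤ p i := fun i => le_max_right _ _
  have hq0 : ∀ i, 0 ≤ q i := fun i => le_max_right _ _
  have hpq : ∀ i, y i = p i - q i := fun i => by
    simp only [hp, hq]; rcases le_total (y i) 0 with h | h <;> simp [h]
  have hpq0 : ∀ i, p i * q i = 0 := fun i => by
    simp only [hp, hq]; rcases le_total (y i) 0 with h | h <;> simp [h]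
  have hpa : Antitone p := fun i j h => max_le_max (hy h) le_rfl
  have hqa : Monotone q := fun i j h => max_le_max (neg_le_neg (hy h)) le_rfl
  have hle : ∀ i, i ≤ m → 0 ≤ y i := fun i h => hm0 ▸ hy h
  have hge : ∀ i, m ≤ i → y i ≤ 0 := fun i h => hm0 ▸ hy h
  have qz : ∀ i, i ≤ m → q i = 0 := fun i h => by simp [hq, hle i h]
  have pz : ∀ i, m ≤ i → p i = 0 := fun i h => by simp [hp, hge i h]
  have hlm : (0 : Fin (n+1)) ≤ m ∧ m ≤ Fin.last n := ⟨Fin.zero_le _, Fin.le_last _⟩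
  have hprod : ∀ i, y i * y (Fin.rev i) = -(p i * q (Fin.rev i) + q i * p (Fin.rev i)) := by
    intro i
    rw [hpq i, hpq (Fin.rev i)]
    rcases le_total i (Fin.rev i) with h | h
    · obtain ⟨h1, h2⟩ := hm i h
      rw [qz _ h1, pz _ h2]; ring
    · obtain ⟨h1, h2⟩ := hm (Fin.rev i) (by simpa using h)
      rw [Fin.rev_rev] at h2
      rw [qz _ h1, pz _ h2]; ring
  have hsw : ∑ i, q i * p (Fin.rev i) = ∑ i, p i * q (Fin.rev i) := by
    rw [← Equiv.sum_comp Fin.revPerm]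
    exact Finset.sum_congr rfl fun i _ => by simp [mul_comm]
  have hS : ∑ i, y i * y (Fin.rev i) = -2 * ∑ i, p i * q (Fin.rev i) := by
    simp only [hprod, Finset.sum_neg_distrib, Finset.sum_add_distrib, hsw]; ring
  have cheb : (∑ i, p i) * (∑ i, q i) ≤ n * ∑ i, p i * q (Fin.rev i) := by
    have h1 : ∑ i, q i = ∑ i, q (Fin.rev i) := (Equiv.sum_comp Fin.revPerm q).symm
    rw [h1, Fin.sum_univ_castSucc, Fin.sum_univ_castSucc (f := fun i => q (Fin.rev i)),
      Fin.sum_univ_castSucc (f := fun i => p i * q (Fin.rev i))]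
    have hl : p (Fin.last n) = 0 := pz _ hlm.2
    have hl2 : q (Fin.rev (Fin.last n)) = 0 := qz _ (by simp)
    rw [hl, hl2]
    simp only [add_zero, mul_zero]
    have mv : Monovary (fun i : Fin n => p i.castSucc) (fun i : Fin n => q (Fin.rev i.castSucc)) := by
      apply Antitone.monovary
      · exact fun i j h => hpa (by simpa using h)
      · exact fun i j h => hqa (by simpa using h)
    have := mv.sum_mul_sum_le_card_mul_sum
    simpa using this
  have sqle : ∀ f : Fin (n+1) → ℝ, (∀ i, 0 ≤ f i) → ∑ i, f i ^2 ≤ (∑ i, f i)^2 := fun f hf =>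
    Finset.sum_sq_le_sq_sum_of_nonneg (fun i _ => hf i)
  have e2 : ∑ i, y i ^2 = ∑ i, p i ^2 + ∑ i, q i ^2 := by
    rw [← Finset.sum_add_distrib]
    exact Finset.sum_congr rfl fun i _ => by rw [hpq i]; linear_combination (-2) * hpq0 i
  have e1 : ∑ i, y i = ∑ i, p i - ∑ i, q i := by
    rw [← Finset.sum_sub_distrib]; exact Finset.sum_congr rfl fun i _ => hpq i
  have := sqle p hp0
  have := sqle q hq0
  rw [hS, e1, e2]
  nlinarith


lemma isCompact_convexHull_fd {E : Type*} [AddCommGroup E] [Module ℝ E] [TopologicalSpace E]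
    [IsTopologicalAddGroup E] [ContinuousSMul ℝ E] [FiniteDimensional ℝ E]
    {s : Set E} (hs : IsCompact s) : IsCompact (convexHull ℝ s) := by
  rcases s.eq_empty_or_nonempty with rfl | ⟨s0, hs0⟩
  · simp
  let ι := Fin (Module.finrank ℝ E + 1)
  have hc : IsCompact ((stdSimplex ℝ ι) ×ˢ (Set.univ.pi (fun _ : ι => s))) :=
    (isCompact_stdSimplex ℝ ι).prod (isCompact_univ_pi fun _ => hs)
  have : convexHull ℝ s = (fun p : (ι → ℝ) × (ι → E) => ∑ i, p.1 i • p.2 i) ''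
      ((stdSimplex ℝ ι) ×ˢ (Set.univ.pi (fun _ : ι => s))) := by
    apply Set.Subset.antisymm
    · intro x hx
      obtain ⟨κ, _, z, w, hz, hai, hw, hw1, hsum⟩ := eq_pos_convex_span_of_mem_convexHull hx
      have hcard : Fintype.card κ ≤ Fintype.card ι := by
        have := hai.card_le_finrank_succ
        have h2 := Submodule.finrank_le (vectorSpan ℝ (Set.range z))
        simp only [ι, Fintype.card_fin]
        omega
      obtain ⟨f⟩ := Function.Embedding.nonempty_of_card_le hcard
      have hf := f.injective
      refine ⟨(Function.extend f w 0, Function.extend f z (fun _ => s0)), ⟨⟨?_, ?_⟩, ?_⟩, ?_⟩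
      · intro i
        by_cases h : ∃ a, f a = i
        · obtain ⟨a, rfl⟩ := h
          simp [hf.extend_apply, (hw a).le]
        · simp [Function.extend_apply' _ _ _ h]
      · rw [← hw1]
        symm
        apply Fintype.sum_of_injective f hf
        · intro i h
          simp [Function.extend_apply' _ _ _ h]
        · intro a; simp [hf.extend_apply]
      · intro i _
        by_cases h : ∃ a, f a = i
        · obtain ⟨a, rfl⟩ := h
          simpa [hf.extend_apply] using hz ⟨a, rfl⟩
        · simpa [Function.extend_apply' _ _ _ h] using hs0
      · rw [← hsum]
        symm
        apply Fintype.sum_of_injective f hf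
        · intro i h
          simp [Function.extend_apply' _ _ _ h]
        · intro a; simp [hf.extend_apply]
    · rintro _ ⟨p, ⟨⟨h1, h2⟩, h3⟩, rfl⟩
      exact (convex_convexHull ℝ s).sum_mem (fun i _ => h1 i) h2
        (fun i _ => subset_convexHull ℝ s (h3 i trivial))
  rw [this]
  apply hc.image
  fun_prop

lemma isCompact_unitary (d : ℕ) : 
    IsCompact (Set.univ : Set (Matrix.unitaryGroup (Fin d) ℂ)) := by
  have h : IsCompact ((Matrix.unitaryGroup (Fin d) ℂ : Set (Matrix (Fin d) (Fin d) ℂ))) := by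
    have hb : IsCompact (Set.univ.pi (fun _ : Fin d => Set.univ.pi (fun _ : Fin d => Metric.closedBall (0:ℂ) 1))) :=
      isCompact_univ_pi fun _ => isCompact_univ_pi fun _ => isCompact_closedBall _ _
    refine hb.of_isClosed_subset ?_ ?_
    · have : ((Matrix.unitaryGroup (Fin d) ℂ : Set (Matrix (Fin d) (Fin d) ℂ)))
        = {A | A * star A = 1} := by
        ext A; exact Matrix.mem_unitaryGroup_iff
      rw [this]
      exact isClosed_eq (by fun_prop) continuous_const
    · intro U hU i _ j _
      simpa using entry_norm_bound_of_unitary hU i j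
  exact isCompact_iff_isCompact_univ.mp h

/-- minimal Frobenius norm element is fixed by isometries preserving the set -/
lemma exists_fixed {n : Type*} [Fintype n] (S : Set (Matrix n n ℂ)) (hc : IsCompact S)
    (hconv : Convex ℝ S) (hne : S.Nonempty) :
    ∃ A ∈ S, ∀ B ∈ S, ∑ p, ∑ q, ‖B p q‖^2 = ∑ p, ∑ q, ‖A p q‖^2 → B = A := by
  have hcont : Continuous (fun A : Matrix n n ℂ => ∑ p, ∑ q, ‖A p q‖^2) := by fun_prop
  obtain ⟨A, hA, hmin⟩ := hc.exists_isMinOn hne hcont.continuousOn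
  refine ⟨A, hA, fun B hB h => ?_⟩
  have hmid : ((1/2:ℝ) • A + (1/2:ℝ) • B) ∈ S := hconv hA hB (by norm_num) (by norm_num) (by norm_num)
  have h1 : ∑ p, ∑ q, ‖A p q‖^2 ≤ _ := hmin hmid
  have key : ∀ p q, ‖((1/2:ℝ) • A + (1/2:ℝ) • B) p q‖^2
     = (1/2) * ‖A p q‖^2 + (1/2) * ‖B p q‖^2 - (1/4) * ‖B p q - A p q‖^2 := by
    intro p q
    simp only [← Complex.normSq_eq_norm_sq, Complex.normSq_apply]
    simp
    ring
  simp only [key, Finset.sum_sub_distrib, Finset.sum_add_distrib, ← Finset.mul_sum, h] at h1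
  have h2 : ∑ p, ∑ q, ‖B p q - A p q‖^2 ≤ 0 := by linarith
  have h3 : ∑ p, ∑ q, ‖B p q - A p q‖^2 = 0 := le_antisymm h2 (by positivity)
  ext p q
  have h4 := (Finset.sum_eq_zero_iff_of_nonneg (fun p _ => by positivity)).mp h3 p (Finset.mem_univ _)
  have h5 := (Finset.sum_eq_zero_iff_of_nonneg (fun p _ => by positivity)).mp h4 q (Finset.mem_univ _)
  have h6 : ‖B p q - A p q‖ = 0 := by simpa using h5
  exact sub_eq_zero.mp (norm_eq_zero.mp h6)

open Matrix in
lemma frob_unitary {n : Type*} [Fintype n] [DecidableEq n] (K A : Matrix n n ℂ) (hK : Kᴴ * K = 1) :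
    ∑ p, ∑ q, ‖(K * A * Kᴴ) p q‖^2 = ∑ p, ∑ q, ‖A p q‖^2 := by
  have tr : ∀ B : Matrix n n ℂ, ((∑ p, ∑ q, ‖B p q‖^2 : ℝ) : ℂ) = (B * Bᴴ).trace := by
    intro B
    simp [Matrix.trace, Matrix.mul_apply, Complex.mul_conj, Complex.normSq_eq_norm_sq]
  apply Complex.ofReal_injective
  rw [tr, tr]
  have : K * A * Kᴴ * (K * A * Kᴴ)ᴴ = K * (A * Aᴴ * Kᴴ) := by
    simp only [conjTranspose_mul, conjTranspose_conjTranspose]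
    calc _ = K * A * (Kᴴ * K) * Aᴴ * Kᴴ := by simp only [Matrix.mul_assoc]
      _ = _ := by rw [hK]; simp only [Matrix.mul_assoc, Matrix.one_mul]
  rw [this, Matrix.trace_mul_comm, Matrix.mul_assoc, hK, Matrix.mul_one]

open Matrix in
noncomputable def KK {d : ℕ} (U : Matrix (Fin d) (Fin d) ℂ) : Matrix (Fin d × Fin d) (Fin d × Fin d) ℂ :=
  Matrix.kroneckerMap (· * ·) U (U.map (starRingEnd ℂ))

open Matrix

lemma KK_entry {d : ℕ} (V : Matrix (Fin d) (Fin d) ℂ) (hV : V.map (starRingEnd ℂ) = V)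
    (A : Matrix (Fin d × Fin d) (Fin d × Fin d) ℂ) (i j k l : Fin d) :
    (KK V * A * (KK V)ᴴ) (i,j) (k,l) =
      ∑ ip, V i ip * ∑ jp, V j jp * ∑ kp, V k kp * ∑ lp, V l lp * A (ip,jp) (kp,lp) := by
  have hc : ∀ a b, starRingEnd ℂ (V a b) = V a b := fun a b => congrFun (congrFun hV a) b
  rw [Matrix.mul_assoc]
  simp only [KK, hV, mul_apply, Fintype.sum_prod_type, conjTranspose_apply, kroneckerMap_apply,
    Finset.mul_sum, star_mul', RCLike.star_def, hc]
  refine Finset.sum_congr rfl fun ip _ => Finset.sum_congr rfl fun jp _ =>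
    Finset.sum_congr rfl fun kp _ => Finset.sum_congr rfl fun lp _ => by ring

lemma inv_sign {d : ℕ} (A : Matrix (Fin d × Fin d) (Fin d × Fin d) ℂ)
    (hinv : ∀ V : Matrix (Fin d) (Fin d) ℂ, V * Vᵀ = 1 → V.map (starRingEnd ℂ) = V →
      ∀ i j k l, A (i,j) (k,l) =
      ∑ ip, V i ip * ∑ jp, V j jp * ∑ kp, V k kp * ∑ lp, V l lp * A (ip,jp) (kp,lp))
    (i j k l : Fin d) (h : ¬ (i = k ∧ j = l) ∧ ¬ (i = l ∧ j = k) ∧ ¬ (i = j ∧ k = l)) :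
    A (i,j) (k,l) = 0 := by
  have hs : ∀ r, A (i,j) (k,l) = (if i = r then -1 else 1) * ((if j = r then -1 else 1) *
      ((if k = r then -1 else 1) * ((if l = r then -1 else 1) * A (i,j) (k,l)))) := by
    intro r
    have := hinv (diagonal fun m => if m = r then -1 else 1) ?_ ?_ i j k l
    · simpa only [diagonal_apply, ite_mul, zero_mul, Finset.sum_ite_eq, Finset.mem_univ, if_true] using this
    · rw [diagonal_transpose, diagonal_mul_diagonal, ← diagonal_one]
      congr 1; ext m; split_ifs <;> simp
    · ext a b
      simp only [map_apply, diagonal_apply]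
      split_ifs <;> simp
  have h1 := hs i
  have h2 := hs j
  have h3 := hs k
  have h4 := hs l
  have e : ∀ w : ℂ, w = -w → w = 0 := fun w hw => by linear_combination (1/2) * hw
  apply e
  by_cases a1 : i = j <;> by_cases a2 : i = k <;> by_cases a3 : i = l <;> by_cases a4 : j = k <;>
    by_cases a5 : j = l <;> by_cases a6 : k = l <;> grind

lemma inv_perm {d : ℕ} (A : Matrix (Fin d × Fin d) (Fin d × Fin d) ℂ)
    (hinv : ∀ V : Matrix (Fin d) (Fin d) ℂ, V * Vᵀ = 1 → V.map (starRingEnd ℂ) = V →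
      ∀ i j k l, A (i,j) (k,l) =
      ∑ ip, V i ip * ∑ jp, V j jp * ∑ kp, V k kp * ∑ lp, V l lp * A (ip,jp) (kp,lp))
    (σ : Equiv.Perm (Fin d)) (i j k l : Fin d) :
    A (i,j) (k,l) = A (σ i, σ j) (σ k, σ l) := by
  have := hinv (Matrix.of fun a b => if σ a = b then 1 else 0) ?_ ?_ i j k l
  · simpa only [of_apply, ite_mul, zero_mul, one_mul, Finset.sum_ite_eq, Finset.mem_univ, if_true] using this
  · ext a b
    simp [mul_apply, one_apply, eq_comm]
  · ext a b
    simp only [map_apply, of_apply]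
    split_ifs <;> simp

lemma inv_rot {d : ℕ} (A : Matrix (Fin d × Fin d) (Fin d × Fin d) ℂ)
    (hinv : ∀ V : Matrix (Fin d) (Fin d) ℂ, V * Vᵀ = 1 → V.map (starRingEnd ℂ) = V →
      ∀ i j k l, A (i,j) (k,l) =
      ∑ ip, V i ip * ∑ jp, V j jp * ∑ kp, V k kp * ∑ lp, V l lp * A (ip,jp) (kp,lp))
    (p q : Fin d) (hpq : p ≠ q) :
    A (p,p) (p,p) = A (p,q) (p,q) + A (p,q) (q,p) + A (p,p) (q,q) := by
  set V : Matrix (Fin d) (Fin d) ℂ := Matrix.of fun a b =>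
    if a = p then (if b = p then 4/5 else 0) + (if b = q then 3/5 else 0)
    else if a = q then (if b = p then -3/5 else 0) + (if b = q then 4/5 else 0)
    else if b = a then 1 else 0 with hVdef
  have row : ∀ (f : Fin d → ℂ) a, ∑ b, V a b * f b =
      if a = p then 4/5 * f p + 3/5 * f q else if a = q then -3/5 * f p + 4/5 * f q else f a := by
    intro f a
    simp only [hVdef, of_apply]
    split_ifs <;> simp [add_mul, Finset.sum_add_distrib]
  have hT : V * Vᵀ = 1 := by
    ext a b
    rw [mul_apply, row]
    simp only [transpose_apply, hVdef, of_apply, one_apply]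
    split_ifs <;> grind
  have hR : V.map (starRingEnd ℂ) = V := by
    ext a b
    simp only [map_apply, hVdef, of_apply]
    split_ifs <;> simp [map_ofNat]
  have h := hinv V hT hR p p p q
  simp only [row, if_true, if_neg hpq.symm] at h
  have sg := inv_sign A hinv
  have pm := inv_perm A hinv (Equiv.swap p q)
  have e1 := pm p p p p
  have e2 := pm p q p q
  have e3 := pm p q q p
  have e4 := pm p p q q
  simp only [Equiv.swap_apply_left, Equiv.swap_apply_right] at e1 e2 e3 e4
  have z1 := sg p p p q (by grind)
  have z2 := sg p p q p (by grind)
  have z3 := sg p q p p (by grind)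
  have z4 := sg q p p p (by grind)
  have z5 := sg q q q p (by grind)
  have z6 := sg q q p q (by grind)
  have z7 := sg q p q q (by grind)
  have z8 := sg p q q q (by grind)
  rw [z1,z2,z3,z4,z5,z6,z7,z8,← e1,← e2,← e3,← e4] at h
  linear_combination (625/84) * h

lemma inv_form {d : ℕ} (A : Matrix (Fin d × Fin d) (Fin d × Fin d) ℂ)
    (hinv : ∀ V : Matrix (Fin d) (Fin d) ℂ, V * Vᵀ = 1 → V.map (starRingEnd ℂ) = V →
      ∀ i j k l, A (i,j) (k,l) =
      ∑ ip, V i ip * ∑ jp, V j jp * ∑ kp, V k kp * ∑ lp, V l lp * A (ip,jp) (kp,lp))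
    (p q : Fin d) (hpq : p ≠ q) :
    ∃ x y z : ℂ, ∀ i j k l, A (i,j) (k,l) = (if i = k ∧ j = l then x else 0) +
      (if i = l ∧ j = k then y else 0) + (if i = j ∧ k = l then z else 0) := by
  refine ⟨A (p,q) (p,q), A (p,q) (q,p), A (p,p) (q,q), ?_⟩
  have pm : ∀ i j, i ≠ j → ∃ σ : Equiv.Perm (Fin d), σ i = p ∧ σ j = q := by
    intro i j hij
    refine ⟨Equiv.swap (Equiv.swap i p j) q * Equiv.swap i p, ?_, ?_⟩
    · simp only [Equiv.Perm.mul_apply, Equiv.swap_apply_left]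
      apply Equiv.swap_apply_of_ne_of_ne _ hpq
      intro h
      have : Equiv.swap i p i = Equiv.swap i p j := by simpa using h
      exact hij ((Equiv.swap i p).injective this)
    · simp
  have hrot : ∀ i, A (i,i) (i,i) = A (p,p) (p,p) := by
    intro i
    rw [inv_perm A hinv (Equiv.swap i p)]
    simp
  intro i j k l
  by_cases hij : i = j
  · subst hij
    by_cases hkl : k = l
    · subst hkl
      by_cases hik : i = k
      · subst hik
        simp [hrot, inv_rot A hinv p q hpq]
      · obtain ⟨σ, h1, h2⟩ := pm i k hik
        rw [inv_perm A hinv σ, h1, h2]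
        simp [hik]
    · rw [inv_sign A hinv _ _ _ _ (by grind)]
      grind
  · by_cases h : i = k ∧ j = l
    · obtain ⟨rfl, rfl⟩ := h
      obtain ⟨σ, h1, h2⟩ := pm i j hij
      rw [inv_perm A hinv σ, h1, h2]
      simp [hij]
    · by_cases h' : i = l ∧ j = k
      · obtain ⟨rfl, rfl⟩ := h'
        obtain ⟨σ, h1, h2⟩ := pm i j hij
        rw [inv_perm A hinv σ, h1, h2]
        simp [hij]
      · rw [inv_sign A hinv _ _ _ _ (by grind)]
        simp [h, h', hij]

lemma KK_mul {d : ℕ} (U V : Matrix (Fin d) (Fin d) ℂ) : KK (U * V) = KK U * KK V := by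
  unfold KK
  rw [Matrix.map_mul, mul_kronecker_mul]

lemma KK_star {d : ℕ} (U : Matrix (Fin d) (Fin d) ℂ) : (KK U)ᴴ = KK Uᴴ := by
  ext p q
  simp [KK]

lemma KK_one {d : ℕ} : KK (1 : Matrix (Fin d) (Fin d) ℂ) = 1 := by
  unfold KK
  rw [Matrix.map_one _ (map_zero _) (map_one _)]
  exact one_kronecker_one

lemma KK_unitary {d : ℕ} (U : Matrix (Fin d) (Fin d) ℂ) (hU : Uᴴ * U = 1) :
    (KK U)ᴴ * KK U = 1 := by
  rw [KK_star, ← KK_mul, hU, KK_one]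

lemma vec_conj {n : Type*} [Fintype n] (K : Matrix n n ℂ) (v : n → ℂ) :
    vecMulVec (K *ᵥ v) (star (K *ᵥ v)) = K * vecMulVec v (star v) * Kᴴ := by
  rw [mul_vecMulVec, vecMulVec_mul, star_mulVec]

def orbS {d : ℕ} (φ : Fin d × Fin d → ℂ) : Set (Matrix (Fin d × Fin d) (Fin d × Fin d) ℂ) :=
  {A | ∃ U : Matrix.unitaryGroup (Fin d) ℂ, A = vecMulVec (KK (U : Matrix (Fin d) (Fin d) ℂ) *ᵥ φ)
    (star (KK (U : Matrix (Fin d) (Fin d) ℂ) *ᵥ φ))}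

lemma orbS_compact {d : ℕ} (φ : Fin d × Fin d → ℂ) : IsCompact (orbS φ) := by
  have : orbS φ = (fun U : Matrix.unitaryGroup (Fin d) ℂ =>
    vecMulVec (KK (U : Matrix (Fin d) (Fin d) ℂ) *ᵥ φ)
    (star (KK (U : Matrix (Fin d) (Fin d) ℂ) *ᵥ φ))) '' Set.univ := by
    ext A; simp [orbS, eq_comm]
  rw [this]
  apply (isCompact_unitary d).image
  have hK : Continuous (fun U : Matrix.unitaryGroup (Fin d) ℂ =>
      KK (U : Matrix (Fin d) (Fin d) ℂ) *ᵥ φ) := by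
    apply Continuous.matrix_mulVec _ continuous_const
    apply continuous_matrix
    intro p q
    simp only [KK, kroneckerMap_apply, map_apply]
    have : ∀ i j, Continuous (fun U : Matrix.unitaryGroup (Fin d) ℂ =>
      (U : Matrix (Fin d) (Fin d) ℂ) i j) := fun i j =>
        (continuous_subtype_val).matrix_elem i j
    exact (this _ _).mul (Complex.continuous_conj.comp (this _ _))
  exact hK.matrix_vecMulVec (continuous_star.comp hK)

def trL (d : ℕ) : Matrix (Fin d × Fin d) (Fin d × Fin d) ℂ →ₗ[ℝ] ℂ where
  toFun A := ∑ i, ∑ j, A (i,j) (i,j)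
  map_add' A B := by simp [Finset.sum_add_distrib]
  map_smul' c A := by simp [Finset.mul_sum]

def wL (d : ℕ) : Matrix (Fin d × Fin d) (Fin d × Fin d) ℂ →ₗ[ℝ] ℂ where
  toFun A := ∑ i, ∑ j, A (i,j) (j,i)
  map_add' A B := by simp [Finset.sum_add_distrib]
  map_smul' c A := by simp [Finset.mul_sum]

def hL (d : ℕ) : Matrix (Fin d × Fin d) (Fin d × Fin d) ℂ →ₗ[ℝ] ℂ where
  toFun A := ∑ i, ∑ j, A (i,i) (j,j)
  map_add' A B := by simp [Finset.sum_add_distrib]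
  map_smul' c A := by simp [Finset.mul_sum]

lemma wL_eq {d : ℕ} (A : Matrix (Fin d × Fin d) (Fin d × Fin d) ℂ) :
    wL d A = (A * (1 : Matrix (Fin d × Fin d) (Fin d × Fin d) ℂ).submatrix Prod.swap id).trace := by
  simp [wL, trace, mul_apply, Fintype.sum_prod_type, one_apply, Prod.ext_iff, ite_and]

lemma wL_inv {d : ℕ} (V : Matrix (Fin d) (Fin d) ℂ) (hV : V.map (starRingEnd ℂ) = V)
    (hU : Vᴴ * V = 1) (A : Matrix (Fin d × Fin d) (Fin d × Fin d) ℂ) :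
    wL d (KK V * A * (KK V)ᴴ) = wL d A := by
  rw [wL_eq, wL_eq]
  set W := (1 : Matrix (Fin d × Fin d) (Fin d × Fin d) ℂ).submatrix Prod.swap id with hW
  have hcomm : (KK V)ᴴ * W = W * (KK V)ᴴ := by
    ext p q
    simp [KK, hV, hW, mul_apply, Fintype.sum_prod_type, one_apply, Prod.ext_iff, ite_and, mul_comm]
  rw [Matrix.mul_assoc, hcomm, Matrix.mul_assoc, Matrix.trace_mul_comm, Matrix.mul_assoc,
    Matrix.mul_assoc, KK_unitary V hU, Matrix.mul_one]

lemma vec_apply {d : ℕ} (s : Fin d → ℂ) (φ : Fin d × Fin d → ℂ)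
    (hφ : φ = fun p => if p.1 = p.2 then s p.1 else 0) (U : Matrix (Fin d) (Fin d) ℂ) (i j : Fin d) :
    (KK U *ᵥ φ) (i,j) = (U * diagonal s * Uᴴ) i j := by
  subst hφ
  simp [KK, mulVec, dotProduct, Fintype.sum_prod_type, mul_apply, diagonal_apply]
  exact Finset.sum_congr rfl fun k _ => by ring

lemma hL_orb {d : ℕ} (s : Fin d → ℂ) (φ : Fin d × Fin d → ℂ)
    (hφ : φ = fun p => if p.1 = p.2 then s p.1 else 0) (U : Matrix (Fin d) (Fin d) ℂ)
    (hU : Uᴴ * U = 1) :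
    hL d (vecMulVec (KK U *ᵥ φ) (star (KK U *ᵥ φ))) = (∑ i, s i) * starRingEnd ℂ (∑ i, s i) := by
  have h1 : ∑ i, (KK U *ᵥ φ) (i,i) = ∑ i, s i := by
    simp only [vec_apply s φ hφ]
    change trace _ = _
    rw [Matrix.trace_mul_comm, ← Matrix.mul_assoc, hU, Matrix.one_mul, trace_diagonal]
  rw [← h1]
  simp only [hL, LinearMap.coe_mk, AddHom.coe_mk, vecMulVec_apply, Pi.star_apply, map_sum,
    Finset.sum_mul_sum, RCLike.star_def]

lemma trL_orb {d : ℕ} (s : Fin d → ℂ) (φ : Fin d × Fin d → ℂ)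
    (hφ : φ = fun p => if p.1 = p.2 then s p.1 else 0) (U : Matrix (Fin d) (Fin d) ℂ)
    (hU : Uᴴ * U = 1) :
    trL d (vecMulVec (KK U *ᵥ φ) (star (KK U *ᵥ φ))) = ∑ i, s i * starRingEnd ℂ (s i) := by
  have h1 : ∀ A, trL d A = trace A := fun A => by
    simp [trL, trace, Fintype.sum_prod_type]
  rw [h1, vec_conj, Matrix.mul_assoc, Matrix.trace_mul_comm, Matrix.mul_assoc, KK_unitary U hU,
    Matrix.mul_one]
  subst hφ
  simp [trace, vecMulVec_apply, Fintype.sum_prod_type, apply_ite]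

lemma wL_orb {d : ℕ} (s : Fin d → ℝ) (φ : Fin d × Fin d → ℂ)
    (hφ : φ = fun p => if p.1 = p.2 then (s p.1 : ℂ) else 0) (U : Matrix (Fin d) (Fin d) ℂ)
    (hU : Uᴴ * U = 1) (R : Matrix (Fin d) (Fin d) ℂ) (hR : Rᵀ = R) (hRR : R * R = 1)
    (hUR : U.map (starRingEnd ℂ) = U * R) :
    wL d (vecMulVec (KK U *ᵥ φ) (star (KK U *ᵥ φ))) =
      (diagonal (fun i => (s i : ℂ)) * R * diagonal (fun i => (s i : ℂ)) * R).trace := by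
  set D := diagonal (fun i => (s i : ℂ)) with hD
  have hDh : Dᴴ = D := by
    rw [hD, diagonal_conjTranspose]; congr 1; ext i; simp
  have hDt : Dᵀ = D := by rw [hD, diagonal_transpose]
  set M := U * D * Uᴴ with hM
  have hMh : Mᴴ = M := by
    rw [hM]; simp only [conjTranspose_mul, conjTranspose_conjTranspose, hDh, Matrix.mul_assoc]
  have h1 : wL d (vecMulVec (KK U *ᵥ φ) (star (KK U *ᵥ φ))) = (M * Mᵀ).trace := by
    simp only [wL, LinearMap.coe_mk, AddHom.coe_mk, vecMulVec_apply, Pi.star_apply,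
      vec_apply (fun i => (s i : ℂ)) φ hφ, trace, diag_apply, Matrix.mul_apply (M := M)]
    refine Finset.sum_congr rfl fun i _ => Finset.sum_congr rfl fun j _ => ?_
    have : star (M j i) = M i j := congrFun (congrFun hMh i) j
    rw [← hD, ← hM, this]
    rfl
  have hUt : Uᵀ = R * Uᴴ := by
    have : Uᴴᵀ = U * R := by rw [← hUR]; ext; simp
    have h4 : Uᴴ = R * Uᵀ := by
      have := congrArg transpose this
      rwa [transpose_transpose, transpose_mul, hR] at this
    rw [h4, ← Matrix.mul_assoc, hRR, Matrix.one_mul]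
  have hUs : Uᴴᵀ = U * R := by rw [← hUR]; ext; simp
  rw [h1, hM]
  simp only [transpose_mul, hDt, hUt, hUs]
  calc _ = (U * (D * (Uᴴ * U) * R * D * R * Uᴴ)).trace := by simp only [Matrix.mul_assoc]
    _ = (D * (Uᴴ * U) * R * D * R * (Uᴴ * U)).trace := by
      rw [Matrix.trace_mul_comm]; simp only [Matrix.mul_assoc]
    _ = _ := by rw [hU]; simp

lemma exists_U {d : ℕ} (s : Fin d → ℝ) (φ : Fin d × Fin d → ℂ)
    (hφ : φ = fun p => if p.1 = p.2 then (s p.1 : ℂ) else 0) :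
    ∃ A ∈ orbS φ, wL d A = ((∑ i, s i * s (Fin.rev i) : ℝ) : ℂ) := by
  set R : Matrix (Fin d) (Fin d) ℂ := Matrix.of fun i j => if Fin.rev i = j then 1 else 0 with hRdef
  have hR : Rᵀ = R := by
    ext i j
    simp only [hRdef, transpose_apply, of_apply]
    exact if_congr (by rw [Fin.rev_eq_iff, eq_comm]) rfl rfl
  have hRR : R * R = 1 := by
    ext i j
    simp only [hRdef, Matrix.mul_apply, of_apply, ite_mul, one_mul, zero_mul, Finset.sum_ite_eq,
      Finset.mem_univ, if_true, Fin.rev_rev, one_apply]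
  have hRc : R.map (starRingEnd ℂ) = R := by
    ext i j
    simp only [hRdef, map_apply, of_apply]
    split_ifs <;> simp
  have hRh : Rᴴ = R := by
    have : Rᴴ = (R.map (starRingEnd ℂ))ᵀ := by ext; simp
    rw [this, hRc, hR]
  set α : ℂ := (1 + Complex.I) / 2 with hα
  set β : ℂ := (1 - Complex.I) / 2 with hβ
  have hαβ : starRingEnd ℂ α = β := by simp [hα, hβ, map_ofNat, sub_eq_add_neg]
  have hβα : starRingEnd ℂ β = α := by rw [← hαβ]; simp
  have e1 : α * β = 1/2 := by
    rw [hα, hβ]; linear_combination (-1/4) * Complex.I_sq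
  have e2 : α * α + β * β = 0 := by
    rw [hα, hβ]; linear_combination (1/2) * Complex.I_sq
  set U : Matrix (Fin d) (Fin d) ℂ := α • 1 + β • R with hUdef
  have hUh : Uᴴ = β • 1 + α • R := by
    rw [hUdef, conjTranspose_add, conjTranspose_smul, conjTranspose_smul, hRh, conjTranspose_one]
    simp only [RCLike.star_def, hαβ, hβα]
  have hU : Uᴴ * U = 1 := by
    rw [hUh, hUdef]
    simp only [Matrix.add_mul, Matrix.mul_add, Matrix.smul_mul, Matrix.mul_smul, Matrix.one_mul,
      Matrix.mul_one, hRR, smul_smul]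
    calc _ = (2 * (α * β)) • (1 : Matrix (Fin d) (Fin d) ℂ) + (α * α + β * β) • R := by module
      _ = 1 := by rw [e1, e2]; simp
  have hUR : U.map (starRingEnd ℂ) = U * R := by
    have : U.map (starRingEnd ℂ) = Uᴴᵀ := by ext; simp
    rw [this, hUh, transpose_add, transpose_smul, transpose_smul, hR, transpose_one, hUdef,
      Matrix.add_mul, Matrix.smul_mul, Matrix.smul_mul, hRR, Matrix.one_mul, add_comm]
  refine ⟨_, ⟨⟨U, Matrix.mem_unitaryGroup_iff'.mpr hU⟩, rfl⟩, ?_⟩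
  rw [wL_orb s φ hφ U hU R hR hRR hUR]
  rw [trace]
  push_cast
  refine Finset.sum_congr rfl fun i _ => ?_
  rw [diag_apply, Matrix.mul_apply, Finset.sum_eq_single (Fin.rev i)]
  · simp [hRdef]
  · intro j _ hj
    rw [mul_diagonal, diagonal_mul]
    simp [hRdef, hj.symm]
  · simp

lemma exists_one {d : ℕ} (s : Fin d → ℝ) (φ : Fin d × Fin d → ℂ)
    (hφ : φ = fun p => if p.1 = p.2 then (s p.1 : ℂ) else 0) :
    ∃ A ∈ orbS φ, wL d A = ((∑ i, s i ^ 2 : ℝ) : ℂ) := by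
  refine ⟨_, ⟨1, rfl⟩, ?_⟩
  rw [wL_orb s φ hφ _ (by simp) 1 (by simp) (by simp)
    (by simp [Matrix.map_one _ (map_zero _) (map_one _)])]
  simp [trace, pow_two]

lemma conj_mem {d : ℕ} (φ : Fin d × Fin d → ℂ) (V : Matrix (Fin d) (Fin d) ℂ)
    (hV : Vᴴ * V = 1) (A : Matrix (Fin d × Fin d) (Fin d × Fin d) ℂ)
    (hA : A ∈ convexHull ℝ (orbS φ)) : KK V * A * (KK V)ᴴ ∈ convexHull ℝ (orbS φ) := by
  let L : Matrix (Fin d × Fin d) (Fin d × Fin d) ℂ →ₗ[ℝ] Matrix (Fin d × Fin d) (Fin d × Fin d) ℂ :=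
    { toFun := fun A => KK V * A * (KK V)ᴴ
      map_add' := fun A B => by simp [Matrix.mul_add, Matrix.add_mul]
      map_smul' := fun c A => by simp }
  have h1 : L A ∈ L '' convexHull ℝ (orbS φ) := ⟨A, hA, rfl⟩
  rw [LinearMap.image_convexHull] at h1
  refine convexHull_mono ?_ h1
  rintro _ ⟨_, ⟨U, rfl⟩, rfl⟩
  refine ⟨⟨V, Matrix.mem_unitaryGroup_iff'.mpr hV⟩ * U, ?_⟩
  change KK V * _ * (KK V)ᴴ = _
  rw [← vec_conj]
  simp only [Matrix.UnitaryGroup.mul_val, KK_mul, mulVec_mulVec]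

lemma lam_antitone (d : ℕ) (lam : Fin d → ℝ)
    (hform : ∃ (k : ℕ), 1 ≤ k ∧ k ≤ d - 1 ∧ ∃ t : ℝ,
      ((∀ i : Fin d, lam i = if (i : ℕ) < k then t else (1 - k * t) / ((d : ℝ) - k)) ∧
        0 ≤ (1 - k * t) / ((d : ℝ) - k) ∧ (1 - k * t) / ((d : ℝ) - k) ≤ t) ∨
      ((∀ i : Fin d, lam i =
          if (i : ℕ) < k then t else if (i : ℕ) = k then 1 - k * t else 0) ∧
        0 ≤ 1 - k * t ∧ 1 - k * t ≤ t)) : Antitone lam := by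
  obtain ⟨k, -, -, t, ⟨h1, h2, h3⟩ | ⟨h1, h2, h3⟩⟩ := hform
  · intro i j hij
    rw [Fin.le_def] at hij
    rw [h1 i, h1 j]
    split_ifs <;> first | omega | linarith
  · intro i j hij
    rw [Fin.le_def] at hij
    rw [h1 i, h1 j]
    split_ifs <;> first | omega | linarith

lemma exists_form (d : ℕ) (hd : 2 ≤ d) (b : ℝ) (hb : 0 ≤ d * b)
    (s : Fin d → ℝ) (hanti : Antitone s) (hs2 : ∑ i, s i ^ 2 = 1)
    (hs : ∑ i, s i = Real.sqrt (d * b)) (φ : Fin d × Fin d → ℂ)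
    (hφ : φ = fun p => if p.1 = p.2 then (s p.1 : ℂ) else 0)
    (a : ℝ) (haa : a ∈ Set.Icc (0 : ℝ) ((d : ℝ) * (1 - b) / (2 * ((d : ℝ) - 1)))) :
    ∃ A ∈ convexHull ℝ (orbS φ), (∃ x y z : ℂ, ∀ i j k l, A (i,j) (k,l) =
      (if i = k ∧ j = l then x else 0) +
      (if i = l ∧ j = k then y else 0) + (if i = j ∧ k = l then z else 0)) ∧
      trL d A = 1 ∧ hL d A = d * b ∧ wL d A = 1 - 2 * a := by
  set S : Set (Matrix (Fin d × Fin d) (Fin d × Fin d) ℂ) :=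
    convexHull ℝ (orbS φ) ∩ (wL d) ⁻¹' {(1 - 2 * a : ℂ)} with hS
  have hd1 : (0:ℝ) < d - 1 := by
    have : (2:ℝ) ≤ d := by exact_mod_cast hd
    linarith
  have hconv : Convex ℝ S :=
    (convex_convexHull ℝ _).inter ((convex_singleton _).linear_preimage _)
  have hwc : Continuous (wL d) := by
    change Continuous fun A : Matrix (Fin d × Fin d) (Fin d × Fin d) ℂ => ∑ i, ∑ j, A (i,j) (j,i)
    fun_prop
  have hcomp : IsCompact S :=
    (isCompact_convexHull_fd (orbS_compact φ)).inter_right (isClosed_singleton.preimage hwc)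
  have hne : S.Nonempty := by
    obtain ⟨A0, hA0, hw0⟩ := exists_one s φ hφ
    obtain ⟨A1, hA1, hw1⟩ := exists_U s φ hφ
    rw [hs2] at hw0
    set w1 := ∑ i, s i * s (Fin.rev i) with hw1def
    have hineq : ((d:ℝ) - 1) * w1 ≤ d * b - 1 := by
      obtain ⟨n, rfl⟩ : ∃ n, d = n + 1 := ⟨d - 1, by omega⟩
      have := ineq_sorted n s hanti
      rw [hs, hs2, Real.sq_sqrt hb] at this
      push_cast at this ⊢
      simpa using this
    have ha2 : a * (2 * ((d:ℝ) - 1)) ≤ d * (1 - b) := (le_div_iff₀ (by linarith)).mp haa.2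
    have hwa : w1 ≤ 1 - 2 * a := by
      by_contra! hcon
      nlinarith
    by_cases h1 : w1 = 1
    · have : a = 0 := le_antisymm (by linarith) haa.1
      refine ⟨A0, subset_convexHull ℝ _ hA0, ?_⟩
      simp [hw0, this]
    · have hlt : 0 < 1 - w1 := by
        have := haa.1
        have : w1 ≤ 1 := by linarith
        exact sub_pos.mpr (lt_of_le_of_ne this h1)
      set θ := 2 * a / (1 - w1) with hθ
      have hθ0 : 0 ≤ θ := div_nonneg (by linarith [haa.1]) hlt.le
      have hθ1 : θ ≤ 1 := (div_le_one hlt).mpr (by linarith)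
      have hθe : θ * (1 - w1) = 2 * a := div_mul_cancel₀ _ hlt.ne'
      refine ⟨(1 - θ) • A0 + θ • A1, convex_convexHull ℝ _ (subset_convexHull ℝ _ hA0)
        (subset_convexHull ℝ _ hA1) (by linarith) hθ0 (by ring), ?_⟩
      simp only [Set.mem_preimage, Set.mem_singleton_iff, map_add, map_smul, hw0, hw1,
        Complex.real_smul]
      have : ((θ * (1 - w1) : ℝ) : ℂ) = ((2 * a : ℝ) : ℂ) := by rw [hθe]
      push_cast at this ⊢
      linear_combination -this
  obtain ⟨A, hA, hmin⟩ := exists_fixed S hcomp hconv hne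
  refine ⟨A, hA.1, ?_, ?_, ?_, hA.2⟩
  · refine inv_form A ?_ ⟨0, by omega⟩ ⟨1, by omega⟩ (by simp)
    intro V hVV hVc i j k l
    have hVh : Vᴴ = Vᵀ := by
      conv_rhs => rw [← hVc]
      ext; simp
    have hV : Vᴴ * V = 1 := by rw [hVh]; exact mul_eq_one_comm.mp hVV
    rw [← KK_entry V hVc]
    have := hmin (KK V * A * (KK V)ᴴ) ⟨conj_mem φ V hV A hA.1, by
      have := hA.2
      simp only [Set.mem_preimage, Set.mem_singleton_iff] at this ⊢
      rw [wL_inv V hVc hV, this]⟩ (frob_unitary _ _ (KK_unitary V hV))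
    rw [this]
  · have : convexHull ℝ (orbS φ) ⊆ (trL d) ⁻¹' {1} := by
      apply convexHull_min _ ((convex_singleton _).linear_preimage _)
      rintro _ ⟨U, rfl⟩
      have := trL_orb (fun i => (s i : ℂ)) φ hφ U (Matrix.UnitaryGroup.star_mul_self U)
      rw [Set.mem_preimage, Set.mem_singleton_iff, this]
      simp only [Complex.conj_ofReal]
      rw [← Complex.ofReal_one, ← hs2]
      push_cast
      exact Finset.sum_congr rfl fun i _ => by ring
    exact this hA.1
  · have : convexHull ℝ (orbS φ) ⊆ (hL d) ⁻¹' {(d * b : ℂ)} := by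
      apply convexHull_min _ ((convex_singleton _).linear_preimage _)
      rintro _ ⟨U, rfl⟩
      have := hL_orb (fun i => (s i : ℂ)) φ hφ U (Matrix.UnitaryGroup.star_mul_self U)
      rw [Set.mem_preimage, Set.mem_singleton_iff, this, ← Complex.ofReal_sum, hs,
        Complex.conj_ofReal, ← Complex.ofReal_mul, Real.mul_self_sqrt hb]
      push_cast; rfl
    exact this hA.1

/-- For `b ∈ [1/d,1]`, a Schmidt vector `λ` of the special two-level form with
`∑ᵢ √λᵢ = √(db)`, the pure state `φ = ∑ᵢ √λᵢ |ii⟩`, and any `a ∈ [0, d(1−b)/(2(d−1))]`,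
the OO-invariant state
`ρ = (2a/(d(d−1)))W₋ + bΦ_d + ((1−a−b)/(d(d+1)/2 − 1))(𝟙 − Φ_d − W₋)` lies in the
convex hull of the isotropic orbit `{ |(U ⊗ conj U)φ⟩⟨(U ⊗ conj U)φ| : U unitary }`. -/
theorem ooInvariant_mem_convexHull_isoOrbit (d : ℕ) (hd : 2 ≤ d)
    (b : ℝ) (hb : b ∈ Set.Icc (1 / (d : ℝ)) 1)
    (lam : Fin d → ℝ) (hlam : ∀ i, 0 ≤ lam i) (hsum : ∑ i, lam i = 1)
    (hs : ∑ i, Real.sqrt (lam i) = Real.sqrt (d * b))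
    (hform : ∃ (k : ℕ), 1 ≤ k ∧ k ≤ d - 1 ∧ ∃ t : ℝ,
      ((∀ i : Fin d, lam i = if (i : ℕ) < k then t else (1 - k * t) / ((d : ℝ) - k)) ∧
        0 ≤ (1 - k * t) / ((d : ℝ) - k) ∧ (1 - k * t) / ((d : ℝ) - k) ≤ t) ∨
      ((∀ i : Fin d, lam i =
          if (i : ℕ) < k then t else if (i : ℕ) = k then 1 - k * t else 0) ∧
        0 ≤ 1 - k * t ∧ 1 - k * t ≤ t))
    (φ : Fin d × Fin d → ℂ)
    (hφ : φ = fun p => if p.1 = p.2 then ((Real.sqrt (lam p.1) : ℝ) : ℂ) else 0)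
    (W : Matrix (Fin d × Fin d) (Fin d × Fin d) ℂ)
    (hW : ∀ p q, W p q = if p.1 = q.2 ∧ p.2 = q.1 then 1 else 0)
    (Wm : Matrix (Fin d × Fin d) (Fin d × Fin d) ℂ)
    (hWm : Wm = (2 : ℝ)⁻¹ • (1 - W))
    (Φ : Matrix (Fin d × Fin d) (Fin d × Fin d) ℂ)
    (hΦ : ∀ p q, Φ p q = if p.1 = p.2 ∧ q.1 = q.2 then ((d : ℂ))⁻¹ else 0)
    (a : ℝ) (haa : a ∈ Set.Icc (0 : ℝ) ((d : ℝ) * (1 - b) / (2 * ((d : ℝ) - 1)))) :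
    (2 * a / (d * ((d : ℝ) - 1))) • Wm + b • Φ
        + ((1 - a - b) / ((d : ℝ) * ((d : ℝ) + 1) / 2 - 1)) • (1 - Φ - Wm) ∈
      convexHull ℝ { A : Matrix (Fin d × Fin d) (Fin d × Fin d) ℂ |
        ∃ U : Matrix.unitaryGroup (Fin d) ℂ,
          A = Matrix.vecMulVec
            ((Matrix.kroneckerMap (· * ·) (U : Matrix (Fin d) (Fin d) ℂ)
              ((U : Matrix (Fin d) (Fin d) ℂ).map (starRingEnd ℂ))).mulVec φ)
            (star ((Matrix.kroneckerMap (· * ·) (U : Matrix (Fin d) (Fin d) ℂ)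
              ((U : Matrix (Fin d) (Fin d) ℂ).map (starRingEnd ℂ))).mulVec φ)) } := by
  have hd2 : (2:ℝ) ≤ d := by exact_mod_cast hd
  have hb0 : 0 ≤ b := le_trans (by positivity) hb.1
  obtain ⟨A, hA, ⟨x, y, z, hxyz⟩, h1, h2, h3⟩ := exists_form d hd b (by positivity)
    (fun i => Real.sqrt (lam i))
    (fun i j h => Real.sqrt_le_sqrt (lam_antitone d lam hform h))
    (by simp only [Real.sq_sqrt (hlam _)]; exact hsum) hs φ hφ a haa
  have key : (2 * a / (d * ((d : ℝ) - 1))) • Wm + b • Φ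
        + ((1 - a - b) / ((d : ℝ) * ((d : ℝ) + 1) / 2 - 1)) • (1 - Φ - Wm) = A := by
    simp only [trL, hL, wL, LinearMap.coe_mk, AddHom.coe_mk, hxyz] at h1 h2 h3
    have g1 : (d:ℂ) * d * x + d * y + d * z = 1 := by
      rw [← h1]
      simp [Finset.sum_add_distrib, ite_and, eq_comm]
      ring
    have g2 : (d:ℂ) * x + d * y + d * d * z = d * b := by
      rw [← h2]
      simp [Finset.sum_add_distrib, ite_and, eq_comm]
      ring
    have g3 : (d:ℂ) * x + d * d * y + d * z = 1 - 2 * a := by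
      rw [← h3]
      simp [Finset.sum_add_distrib, ite_and, eq_comm]
      ring
    have n0 : (d:ℂ) ≠ 0 := by
      have : (d:ℝ) ≠ 0 := by linarith
      exact_mod_cast this
    have n1 : (d:ℂ) - 1 ≠ 0 := by
      have : (d:ℝ) - 1 ≠ 0 := by linarith
      exact_mod_cast this
    have n2 : (d:ℂ) + 2 ≠ 0 := by
      have : (d:ℝ) + 2 ≠ 0 := by linarith
      exact_mod_cast this
    set G : ℂ := ((1 - a - b) / ((d : ℂ) * ((d : ℂ) + 1) / 2 - 1)) with hG
    have hG' : G * ((d - 1) * (d + 2)) = 2 * (1 - a - b) := by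
      have : ((d : ℂ) * ((d : ℂ) + 1) / 2 - 1) = (d - 1) * (d + 2) / 2 := by ring
      rw [hG, this]
      field_simp
    set C : ℂ := 2 * a / (d * ((d : ℂ) - 1)) with hC
    have hC' : C * (d * (d - 1)) = 2 * a := by rw [hC]; field_simp
    have n3 : (d:ℂ) * ((d - 1) * (d + 2)) ≠ 0 := mul_ne_zero n0 (mul_ne_zero n1 n2)
    have ex : x = C / 2 + G / 2 := by
      apply mul_left_cancel₀ n3
      linear_combination (d + 2) * g1 - (g1 + g2 + g3) - (d + 2) / 2 * hC' - d / 2 * hG'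
    have ey : y = - C / 2 + G / 2 := by
      apply mul_left_cancel₀ n3
      linear_combination (d + 2) * g3 - (g1 + g2 + g3) + (d + 2) / 2 * hC' - d / 2 * hG'
    have ez' : d * z = b - G := by
      apply mul_left_cancel₀ (mul_ne_zero n1 n2)
      linear_combination (d + 2) * g2 - (g1 + g2 + g3) + hG'
    have ez : z = b / d - G / d := by
      rw [← sub_div, ← ez']
      field_simp
    ext ⟨i, j⟩ ⟨k, l⟩
    rw [hxyz, hWm]
    simp only [Matrix.add_apply, Matrix.smul_apply, Matrix.sub_apply, hW, hΦ, Complex.real_smul,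
      Matrix.one_apply, Prod.mk.injEq]
    push_cast
    rw [← hG, ← hC, ex, ey, ez]
    have e1 : (j = k ∧ i = l) = (i = l ∧ j = k) := by rw [and_comm]
    split_ifs <;> (try field_simp) <;> ring
  rw [key]
  exact hA
end
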